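/- arXiv:2410.13239 — 3 statements merged into one kernel-verified Lean document; each statement's English description precedes it below -/
import Mathlib

section
/- Let (R, m, k) be a one-dimensional Gorenstein local ring which is not regular. Then the minimal number of generators of the R-module Hom_R(m, R) is exactly 2. -/
open CategoryTheory IsLocalRing Pointwise

noncomputable section

/-- The `i`-th Ext group of `M` and `N` over `R`. -/
abbrev extGroup (R : Type) [CommRing R] (M N : Type) [AddCommGroup M] [Module R M]
    [AddCommGroup N] [Module R N] (i : ℕ) : Type :=
  ((Ext R (ModuleCat R) i).obj (Opposite.op (ModuleCat.of R M))).obj (ModuleCat.of R N)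

/-- The `i`-th Tor group of `M` and `N` over `R`. -/
abbrev torGroup (R : Type) [CommRing R] (M N : Type) [AddCommGroup M] [Module R M]
    [AddCommGroup N] [Module R N] (i : ℕ) : Type :=
  ((Tor (ModuleCat R) i).obj (ModuleCat.of R M)).obj (ModuleCat.of R N)

/-- The depth of a module over a local ring, defined via vanishing of `Ext(k, M)`;
it is `⊤` if no Ext module is nonzero. -/
def eDepth (R : Type) [CommRing R] [IsLocalRing R] (M : Type) [AddCommGroup M] [Module R M] :
    ℕ∞ :=
  sInf ((↑) '' {i : ℕ | Nontrivial (extGroup R (ResidueField R) M i)})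

/-- The projective dimension of a module, via vanishing of Ext; `⊤` if not finite. -/
def ePd (R : Type) [CommRing R] (M : Type) [AddCommGroup M] [Module R M] : ℕ∞ :=
  sInf ((↑) '' {n : ℕ | ∀ (N : ModuleCat R) (i : ℕ), n < i →
    Subsingleton (((Ext R (ModuleCat R) i).obj (Opposite.op (ModuleCat.of R M))).obj N)})

/-- A local ring is regular if its maximal ideal is generated by `dim R` many elements. -/
def IsRegularLocal (R : Type) [CommRing R] [IsLocalRing R] : Prop :=
  ∃ s : Finset R, Ideal.span (s : Set R) = maximalIdeal R ∧
    (s.card : WithBot (WithTop ℕ)) = ringKrullDim R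

/-- A local ring is Gorenstein if `R` has finite injective dimension as a module over itself,
expressed via vanishing of `Ext^i(-, R)` for all `i` large. -/
def IsGorensteinLocal (R : Type) [CommRing R] [IsLocalRing R] : Prop :=
  ∃ n : ℕ, ∀ (N : ModuleCat R) (i : ℕ), n < i →
    Subsingleton (((Ext R (ModuleCat R) i).obj (Opposite.op N)).obj (ModuleCat.of R R))

/-- A module is totally reflexive (of Gorenstein dimension zero) if it is finitely
generated, the evaluation map into the double dual is bijective, and
`Ext^i(M, R) = Ext^i(M*, R) = 0` for all `i ≥ 1`. -/
def IsTotallyReflexive (R : Type) [CommRing R] (M : Type) [AddCommGroup M] [Module R M] : Prop :=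
  Module.Finite R M ∧ Function.Bijective (Module.Dual.eval R M) ∧
    (∀ i : ℕ, 1 ≤ i → Subsingleton (extGroup R M R i)) ∧
    (∀ i : ℕ, 1 ≤ i → Subsingleton (extGroup R (Module.Dual R M) R i))

/-- The minimal number of generators of a module. -/
def mu (R : Type) [CommRing R] (M : Type) [AddCommGroup M] [Module R M] : ℕ :=
  sInf {n : ℕ | ∃ s : Finset M, s.card = n ∧ Submodule.span R (s : Set M) = ⊤}

open CategoryTheory Abelian

lemma ext_bridge (R : Type) [CommRing R] (N M : ModuleCat.{0} R) (i : ℕ)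
    (h : Subsingleton (((_root_.Ext R (ModuleCat R) (i+1)).obj (Opposite.op N)).obj M)) :
    Subsingleton (Abelian.Ext N M (i+1)) := by
  let P := projectiveResolution N
  have h0 : Limits.IsZero ((P.complex.linearYonedaObj R M).homology (i+1)) := by
    refine Limits.IsZero.of_iso ?_ (P.isoExt (R := R) (i+1) M).symm
    exact ModuleCat.isZero_of_subsingleton _
  rw [← HomologicalComplex.exactAt_iff_isZero_homology,
    HomologicalComplex.exactAt_iff' _ i (i+1) (i+2) (by simp) (by simp),
    ShortComplex.moduleCat_exact_iff] at h0
  refine subsingleton_of_forall_eq 0 fun α => ?_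
  obtain ⟨f, hf, rfl⟩ := P.extMk_surjective α (i+2) rfl
  rw [P.extMk_eq_zero_iff f (i+2) rfl hf i rfl]
  obtain ⟨g, hg⟩ := h0 f hf
  exact ⟨g, hg⟩

lemma ext_mid {R : Type} [CommRing R] {S : ShortComplex (ModuleCat.{0} R)} (hS : S.ShortExact)
    (M : ModuleCat.{0} R) (i : ℕ) (h1 : Subsingleton (Abelian.Ext S.X₁ M i))
    (h3 : Subsingleton (Abelian.Ext S.X₃ M i)) : Subsingleton (Abelian.Ext S.X₂ M i) := by
  refine subsingleton_of_forall_eq 0 fun α => ?_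
  obtain ⟨y, rfl⟩ := Abelian.Ext.contravariant_sequence_exact₂ hS M α (Subsingleton.elim _ _)
  rw [Subsingleton.elim y 0]; simp

lemma ext_left {R : Type} [CommRing R] {S : ShortComplex (ModuleCat.{0} R)} (hS : S.ShortExact)
    (M : ModuleCat.{0} R) (i : ℕ) (h2 : Subsingleton (Abelian.Ext S.X₂ M i))
    (h3 : Subsingleton (Abelian.Ext S.X₃ M (i+1))) : Subsingleton (Abelian.Ext S.X₁ M i) := by
  refine subsingleton_of_forall_eq 0 fun α => ?_
  obtain ⟨y, rfl⟩ := Abelian.Ext.contravariant_sequence_exact₁ hS M α (add_comm 1 i)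
    (Subsingleton.elim _ _)
  rw [Subsingleton.elim y 0]; simp

lemma ext_right {R : Type} [CommRing R] {S : ShortComplex (ModuleCat.{0} R)} (hS : S.ShortExact)
    (M : ModuleCat.{0} R) (i : ℕ) (h1 : Subsingleton (Abelian.Ext S.X₁ M i))
    (h2 : Subsingleton (Abelian.Ext S.X₂ M (i+1))) : Subsingleton (Abelian.Ext S.X₃ M (i+1)) := by
  refine subsingleton_of_forall_eq 0 fun α => ?_
  obtain ⟨y, rfl⟩ := Abelian.Ext.contravariant_sequence_exact₃ hS M α
    (Subsingleton.elim _ _) (add_comm 1 i)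
  rw [Subsingleton.elim y 0]; simp

lemma ext_smul_id {R : Type} [CommRing R] (N M : ModuleCat.{0} R) (i : ℕ) (x : R)
    (y : Abelian.Ext N M i) :
    (Abelian.Ext.mk₀ (x • 𝟙 N)).comp y (zero_add i) = x • y := by
  rw [Abelian.Ext.mk₀_smul, Abelian.Ext.smul_comp, Abelian.Ext.mk₀_id_comp]

lemma ext_reg {R : Type} [CommRing R] [IsNoetherianRing R] [IsLocalRing R]
    (N M : ModuleCat.{0} R) [Module.Finite R N] [Module.Finite R M] (i : ℕ) (x : R)
    (reg : IsSMulRegular N x) (hx : x ∈ maximalIdeal R)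
    (h : Subsingleton (Abelian.Ext (ModuleCat.of R (N ⧸ (x • (⊤ : Submodule R N)))) M (i+1))) :
    Subsingleton (Abelian.Ext N M i) := by
  have hS := reg.smulShortComplex_shortExact
  have key : (⊤ : Submodule R (Abelian.Ext N M i)) ≤ maximalIdeal R • ⊤ := by
    intro α _
    obtain ⟨y, hy⟩ := Abelian.Ext.contravariant_sequence_exact₁ hS M α (add_comm 1 i)
      (@Subsingleton.elim _ h _ _)
    have : α = x • y := by
      exact hy.symm.trans (ext_smul_id N M i x y)
    rw [this]
    exact Submodule.smul_mem_smul hx trivial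
  have := Submodule.eq_bot_of_le_smul_of_le_jacobson_bot (maximalIdeal R) _
    (Module.Finite.fg_top (R := R) (M := Abelian.Ext N M i)) key (IsLocalRing.maximalIdeal_le_jacobson _)
  exact (Submodule.subsingleton_iff R).mp (subsingleton_of_bot_eq_top this.symm)

lemma ext_step {R : Type} [CommRing R] [IsNoetherianRing R] [IsLocalRing R]
    (M : ModuleCat.{0} R) [Module.Finite R M] (i : ℕ)
    (hk : ∀ (N : Type) [AddCommGroup N] [Module R N], (N ≃ₗ[R] R ⧸ maximalIdeal R) →
      Subsingleton (Abelian.Ext (ModuleCat.of R N) M i))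
    (h : ∀ (N : Type) [AddCommGroup N] [Module R N] [Module.Finite R N],
      Subsingleton (Abelian.Ext (ModuleCat.of R N) M (i+1)))
    (N : Type) [AddCommGroup N] [Module R N] [hN : Module.Finite R N] :
      Subsingleton (Abelian.Ext (ModuleCat.of R N) M i) := by
  induction hN using IsNoetherianRing.induction_on_isQuotientEquivQuotientPrime R with
  | subsingleton N =>
    refine subsingleton_of_forall_eq 0 fun α => ?_
    have : 𝟙 (ModuleCat.of R N) = 0 := (ModuleCat.isZero_of_subsingleton _).eq_of_src _ _
    rw [← Abelian.Ext.mk₀_id_comp α, this]; simp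
  | quotient N p e =>
    by_cases hp : p.1 = maximalIdeal R
    · exact hk N (e.trans (Submodule.quotEquivOfEq _ _ hp))
    · have hle := IsLocalRing.le_maximalIdeal p.2.ne_top
      obtain ⟨x, hx, hxp⟩ := SetLike.exists_of_lt (lt_of_le_of_ne hle hp)
      refine ext_reg (ModuleCat.of R N) M i x ?_ hx ?_
      · have : IsSMulRegular (R ⧸ p.1) x := by
          have := p.2
          have h0 : Ideal.Quotient.mk p.1 x ≠ 0 := by rwa [Ne, Ideal.Quotient.eq_zero_iff_mem]
          intro a b hab
          exact mul_left_cancel₀ h0 (by simpa [Algebra.smul_def] using hab)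
        exact (e.isSMulRegular_congr x).mpr this
      · exact h _
  | exact N₁ N₂ N₃ f g hf hg hfg h1 h3 =>
    let S : ShortComplex (ModuleCat.{0} R) := ModuleCat.shortComplexOfCompEqZero f g hfg.linearMap_comp_eq_zero
    have hS : S.ShortExact :=
      { exact := ModuleCat.shortComplex_exact _ hfg
        mono_f := (ModuleCat.mono_iff_injective _).mpr hf
        epi_g := (ModuleCat.epi_iff_surjective _).mpr hg }
    exact ext_mid hS M i h1 h3

lemma ses_quot {R : Type} [CommRing R] {A B : Type} [AddCommGroup A] [Module R A] [AddCommGroup B]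
    [Module R B] (f : A →ₗ[R] B) (hf : Function.Injective f) :
    (ModuleCat.shortComplexOfCompEqZero f (LinearMap.range f).mkQ
      (LinearMap.exact_map_mkQ_range f).linearMap_comp_eq_zero).ShortExact :=
  { exact := ModuleCat.shortComplex_exact _ (LinearMap.exact_map_mkQ_range f)
    mono_f := (ModuleCat.mono_iff_injective _).mpr hf
    epi_g := (ModuleCat.epi_iff_surjective _).mpr (Submodule.mkQ_surjective _) }

/-- Bass type argument. -/
lemma ext_vanish {R : Type} [CommRing R] [IsNoetherianRing R] [IsLocalRing R]
    (M : ModuleCat.{0} R) [Module.Finite R M] (n d : ℕ)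
    (C : Type) [AddCommGroup C] [Module R C] [Module.Finite R C]
    (φ : (R ⧸ maximalIdeal R) →ₗ[R] C) (hφ : Function.Injective φ)
    (hC : ∀ j, d < j → Subsingleton (Abelian.Ext (ModuleCat.of R C) M j))
    (h : ∀ (N : Type) [AddCommGroup N] [Module R N] [Module.Finite R N] (j : ℕ), n < j →
      Subsingleton (Abelian.Ext (ModuleCat.of R N) M j)) (j : ℕ) (hj : d < j)
    (N : Type) [AddCommGroup N] [Module R N] [Module.Finite R N] :
      Subsingleton (Abelian.Ext (ModuleCat.of R N) M j) := by
  induction hm : (n + 1 - j) generalizing j N with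
  | zero => exact h N j (by omega)
  | succ m ih =>
    refine ext_step M j ?_ ?_ N
    · intro K _ _ e
      have hS := ses_quot (φ ∘ₗ e.toLinearMap) (hφ.comp e.injective)
      exact ext_left hS M j (hC j hj) (ih (j+1) (by omega) _ (by omega))
    · intro N' _ _ _
      exact ih (j+1) (by omega) N' (by omega)

lemma quot_kill {R : Type} [CommRing R] (x : R) (c : R ⧸ (x • (⊤ : Submodule R R))) :
    x • c = 0 := by
  obtain ⟨c, rfl⟩ := Submodule.mkQ_surjective _ c
  rw [← map_smul, Submodule.mkQ_apply, Submodule.Quotient.mk_eq_zero]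
  exact Submodule.smul_mem_pointwise_smul _ _ ⊤ trivial

lemma minimal_mem_ass {R : Type} [CommRing R] [IsNoetherianRing R] (p : Ideal R)
    (hp : p ∈ minimalPrimes R) : p ∈ associatedPrimes R R := by
  apply Module.associatedPrimes.minimalPrimes_annihilator_subset_associatedPrimes R R
  rw [Module.annihilator_eq_bot.mpr inferInstance]
  exact hp

lemma gor_ext {R : Type} [CommRing R] [IsLocalRing R]
    (hG : IsGorensteinLocal R) : ∃ n : ℕ, ∀ (N : Type) [AddCommGroup N] [Module R N]
      [Module.Finite R N] (j : ℕ), n < j →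
      Subsingleton (Abelian.Ext (ModuleCat.of R N) (ModuleCat.of R R) j) := by
  obtain ⟨n, hn⟩ := hG
  refine ⟨n, fun N _ _ _ j hj => ?_⟩
  obtain ⟨i, rfl⟩ : ∃ i, j = i + 1 := ⟨j - 1, by omega⟩
  exact ext_bridge R _ _ i (hn _ _ hj)

lemma exists_regular {R : Type} [CommRing R] [IsNoetherianRing R] [IsLocalRing R]
    (hG : IsGorensteinLocal R) (hdim : ringKrullDim R = 1) :
    ∃ x ∈ maximalIdeal R, IsSMulRegular R x := by
  by_contra hcon
  push Not at hcon
  have hm : maximalIdeal R ∈ associatedPrimes R R := by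
    have ⟨P, hP⟩ := ((maximalIdeal R).subset_union_prime_finite (associatedPrimes.finite R R)
        (f := id) 0 0 fun _ h _ _ ↦ h.isPrime).1 <| by
      simp_rw [id, biUnion_associatedPrimes_eq_compl_regular]
      exact fun x hx => hcon x hx
    exact (IsLocalRing.maximalIdeal.isMaximal R).eq_of_le hP.1.isPrime.ne_top hP.2 ▸ hP.1
  obtain ⟨_, φ, hφ⟩ := (isAssociatedPrime_iff_exists_injective_linearMap _ _).mp hm
  obtain ⟨n, hn⟩ := gor_ext hG
  have hC : ∀ j, 0 < j → Subsingleton (Abelian.Ext (ModuleCat.of R R) (ModuleCat.of R R) j) := by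
    intro j hj
    obtain ⟨i, rfl⟩ : ∃ i, j = i + 1 := ⟨j - 1, by omega⟩
    have : Projective (ModuleCat.of R R) := ModuleCat.projective_of_free (Module.Basis.singleton Unit R)
    exact Abelian.Ext.subsingleton_of_projective _ _ _
  have hv := ext_vanish (ModuleCat.of R R) n 0 R φ hφ hC hn 1 one_pos
  have h0 : ¬ Ring.KrullDimLE 0 R := by
    intro h
    rw [Ring.krullDimLE_iff, hdim] at h
    exact absurd h (by norm_num)
  rw [Ring.krullDimLE_zero_iff_forall_minimalPrimes_isMaximal] at h0
  push Not at h0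
  obtain ⟨p, hp, hpm⟩ := h0
  obtain ⟨hpp, ψ, hψ⟩ := (isAssociatedPrime_iff_exists_injective_linearMap _ _).mp (minimal_mem_ass p hp)
  have hne : p ≠ maximalIdeal R := fun h => hpm (h ▸ IsLocalRing.maximalIdeal.isMaximal R)
  obtain ⟨x, hx, hxp⟩ := SetLike.exists_of_lt
    (lt_of_le_of_ne (IsLocalRing.le_maximalIdeal hpp.ne_top) hne)
  have reg : IsSMulRegular (R ⧸ p) x := by
    have h0 : Ideal.Quotient.mk p x ≠ 0 := by rwa [Ne, Ideal.Quotient.eq_zero_iff_mem]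
    intro a b hab
    exact mul_left_cancel₀ h0 (by simpa [Algebra.smul_def] using hab)
  have hs := ext_reg (ModuleCat.of R (R ⧸ p)) (ModuleCat.of R R) 0 x reg hx (hv _)
  have hs' : Subsingleton (ModuleCat.of R (R ⧸ p) ⟶ ModuleCat.of R R) :=
    Abelian.Ext.homEquiv₀.subsingleton_congr.mp hs
  have h1 : ModuleCat.ofHom ψ = 0 := Subsingleton.elim _ _
  have h2 : ψ = 0 := by simpa using congrArg ModuleCat.Hom.hom h1
  have h3 : (1 : R ⧸ p) = 0 := hψ (by rw [h2]; simp)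
  exact hpp.ne_top ((Ideal.eq_top_iff_one p).mpr (Ideal.Quotient.eq_zero_iff_mem.mp h3))

lemma max_ass_quot {R : Type} [CommRing R] [IsNoetherianRing R] [IsLocalRing R]
    (hdim : ringKrullDim R = 1) (x : R) (hx : x ∈ maximalIdeal R) (reg : IsSMulRegular R x) :
    ∃ φ : (R ⧸ maximalIdeal R) →ₗ[R] (R ⧸ (x • (⊤ : Submodule R R))), Function.Injective φ := by
  have hnt : Nontrivial (R ⧸ (x • (⊤ : Submodule R R))) := by
    rw [Submodule.Quotient.nontrivial_iff]
    intro h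
    have : (1 : R) ∈ x • (⊤ : Submodule R R) := by rw [h]; trivial
    obtain ⟨y, -, hy⟩ := (Submodule.mem_smul_pointwise_iff_exists _ _ _).mp this
    exact (Ideal.ne_top_iff_one _).mp (IsLocalRing.maximalIdeal.isMaximal R).ne_top
      (hy ▸ Ideal.mul_mem_right _ _ hx)
  obtain ⟨P, hP⟩ := associatedPrimes.nonempty R (R ⧸ (x • (⊤ : Submodule R R)))
  have hxP : x ∈ P := by
    apply IsAssociatedPrime.annihilator_le hP
    rw [Submodule.mem_annihilator]
    intro c _
    exact quot_kill x c
  obtain ⟨hPp, φ, hφ⟩ := (isAssociatedPrime_iff_exists_injective_linearMap _ _).mp hP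
  have h1 : Ring.KrullDimLE 1 R := by rw [Ring.krullDimLE_iff, hdim]; simp
  rcases Ring.krullDimLE_one_iff.mp h1 P hPp with h | h
  · exfalso
    have hx' : x ∈ ⋃ p ∈ associatedPrimes R R, (p : Set R) :=
      Set.mem_iUnion₂_of_mem (minimal_mem_ass P h) hxP
    rw [biUnion_associatedPrimes_eq_compl_regular] at hx'
    exact hx' reg
  · obtain rfl := IsLocalRing.eq_maximalIdeal h
    exact ⟨φ, hφ⟩

lemma type_one {R : Type} [CommRing R] [IsNoetherianRing R] [IsLocalRing R]
    (hG : IsGorensteinLocal R) (x : R) (hx : x ∈ maximalIdeal R) (reg : IsSMulRegular R x)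
    (φ ψ : (R ⧸ maximalIdeal R) →ₗ[R] (R ⧸ (x • (⊤ : Submodule R R))))
    (hφ : Function.Injective φ) :
    ∃ g : (R ⧸ (x • (⊤ : Submodule R R))) →ₗ[R] (R ⧸ (x • (⊤ : Submodule R R))), g ∘ₗ φ = ψ := by
  let A := ModuleCat.of R R
  let K := ModuleCat.of R (R ⧸ maximalIdeal R)
  let C := ModuleCat.of R (R ⧸ (x • (⊤ : Submodule R R)))
  have hA : Projective A := ModuleCat.projective_of_free (Module.Basis.singleton Unit R)
  obtain ⟨n, hn⟩ := gor_ext hG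
  have hS : (A.smulShortComplex x).ShortExact := IsSMulRegular.smulShortComplex_shortExact reg
  have hC : ∀ j, 1 < j → Subsingleton (Abelian.Ext C A j) := by
    intro j hj
    obtain ⟨i, rfl⟩ : ∃ i, j = (i + 1) + 1 := ⟨j - 2, by omega⟩
    exact ext_right hS A (i+1) (Abelian.Ext.subsingleton_of_projective A A i)
      (Abelian.Ext.subsingleton_of_projective A A (i+1))
  have hv := ext_vanish A n 1 _ φ hφ hC hn 2 one_lt_two
  have hT := ses_quot φ hφ
  let e : Abelian.Ext C A 1 := hS.extClass
  obtain ⟨y, hy⟩ := Abelian.Ext.contravariant_sequence_exact₁ hT A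
    ((Abelian.Ext.mk₀ (ModuleCat.ofHom ψ : K ⟶ C)).comp e (zero_add 1)) (n₁ := 2) rfl
    (@Subsingleton.elim _ (hv _) _ _)
  change Abelian.Ext C A 1 at y
  have hy' : (Abelian.Ext.mk₀ (ModuleCat.ofHom φ : K ⟶ C)).comp y (zero_add 1) =
    (Abelian.Ext.mk₀ (ModuleCat.ofHom ψ : K ⟶ C)).comp e (zero_add 1) := hy
  have hxC : x • 𝟙 C = 0 := by
    refine ModuleCat.hom_ext (LinearMap.ext fun c => ?_)
    exact quot_kill x c
  have hxy : x • y = 0 := by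
    rw [← ext_smul_id, hxC]; simp
  have hyx : y.comp (Abelian.Ext.mk₀ (x • 𝟙 A)) (add_zero 1) = 0 := by
    rw [Abelian.Ext.mk₀_smul, Abelian.Ext.comp_smul, Abelian.Ext.comp_mk₀_id, hxy]
  obtain ⟨g₀, hg₀⟩ := Abelian.Ext.covariant_sequence_exact₁ C hS y hyx (n₀ := 0) rfl
  change Abelian.Ext C C 0 at g₀
  have hg₀' : g₀.comp e (zero_add 1) = y := hg₀
  obtain ⟨g, rfl⟩ := (Abelian.Ext.mk₀_bijective C C).2 g₀
  have hz : (Abelian.Ext.mk₀ ((ModuleCat.ofHom φ : K ⟶ C) ≫ g - (ModuleCat.ofHom ψ : K ⟶ C))).comp e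
      (zero_add 1) = 0 := by
    rw [sub_eq_add_neg, Abelian.Ext.mk₀_add, Abelian.Ext.mk₀_neg, Abelian.Ext.add_comp,
      Abelian.Ext.neg_comp, ← hy', ← hg₀', ← Abelian.Ext.mk₀_comp_mk₀_assoc, add_neg_cancel]
  obtain ⟨h₀, hh₀⟩ := Abelian.Ext.covariant_sequence_exact₃ K hS _ (n₁ := 1) rfl hz
  change Abelian.Ext K A 0 at h₀
  obtain ⟨h, rfl⟩ := (Abelian.Ext.mk₀_bijective K A).2 h₀
  have hh : h = 0 := by
    refine ModuleCat.hom_ext (LinearMap.ext fun c => ?_)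
    apply reg
    change x • (h.hom c) = x • (0 : R)
    rw [← map_smul]
    have : x • c = 0 := by
      obtain ⟨c, rfl⟩ := Submodule.mkQ_surjective _ c
      change x • (Submodule.mkQ _ c) = 0
      rw [← map_smul, Submodule.mkQ_apply, Submodule.Quotient.mk_eq_zero]
      exact Ideal.mul_mem_right _ _ hx
    rw [this]; simp
  have hfin : (ModuleCat.ofHom φ : K ⟶ C) ≫ g - (ModuleCat.ofHom ψ : K ⟶ C) = 0 := by
    apply (Abelian.Ext.mk₀_bijective K C).1
    rw [Abelian.Ext.mk₀_zero]
    refine hh₀.symm.trans ?_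
    rw [hh, Abelian.Ext.mk₀_zero]
    exact Abelian.Ext.zero_comp _ _ _ _ _
  refine ⟨g.hom, ?_⟩
  have h5 : (ModuleCat.ofHom φ : K ⟶ C) ≫ g = (ModuleCat.ofHom ψ : K ⟶ C) := sub_eq_zero.mp hfin
  exact congrArg ModuleCat.Hom.hom h5

lemma socle_mem {R : Type} [CommRing R] [IsNoetherianRing R] [IsLocalRing R]
    (hG : IsGorensteinLocal R) (hdim : ringKrullDim R = 1) (x : R) (hx : x ∈ maximalIdeal R)
    (reg : IsSMulRegular R x) :
    ∃ s : R, (∀ c, s ≠ x * c) ∧ (∀ y ∈ maximalIdeal R, ∃ c, y * s = x * c) ∧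
      ∀ t : R, (∀ y ∈ maximalIdeal R, ∃ c, y * t = x * c) → ∃ a b, t = a * s + b * x := by
  have hmem : ∀ t : R, Submodule.mkQ (x • (⊤ : Submodule R R)) t = 0 ↔ ∃ c, t = x * c := by
    intro t
    rw [Submodule.mkQ_apply, Submodule.Quotient.mk_eq_zero,
      Submodule.mem_smul_pointwise_iff_exists]
    simp [eq_comm]
  obtain ⟨φ, hφ⟩ := max_ass_quot hdim x hx reg
  obtain ⟨s, hs⟩ := Submodule.mkQ_surjective _ (φ (Submodule.mkQ _ 1))
  refine ⟨s, ?_, ?_, ?_⟩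
  · intro c hc
    have h0 : φ (Submodule.mkQ _ 1) = φ 0 := by
      rw [← hs, map_zero, hmem]; exact ⟨c, hc⟩
    have h1 := hφ h0
    rw [Submodule.mkQ_apply, Submodule.Quotient.mk_eq_zero] at h1
    exact (Ideal.ne_top_iff_one _).mp (IsLocalRing.maximalIdeal.isMaximal R).ne_top h1
  · intro y hy
    rw [← hmem, ← smul_eq_mul, map_smul, hs, ← map_smul, ← map_smul]
    have : (maximalIdeal R).mkQ (y • 1) = 0 := by
      rw [Submodule.mkQ_apply, Submodule.Quotient.mk_eq_zero]; simpa using hy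
    rw [this, map_zero]
  · intro t ht
    let ψ : (R ⧸ maximalIdeal R) →ₗ[R] (R ⧸ (x • (⊤ : Submodule R R))) :=
      Submodule.liftQ _ (LinearMap.toSpanSingleton R _ (Submodule.mkQ (x • (⊤ : Submodule R R)) t)) (by
        intro y hy
        rw [LinearMap.mem_ker, LinearMap.toSpanSingleton_apply, ← map_smul, hmem]
        exact ht y hy)
    obtain ⟨g, hg⟩ := type_one hG x hx reg φ ψ hφ
    obtain ⟨a, ha⟩ := Submodule.mkQ_surjective _ (g (Submodule.mkQ _ 1))
    have h1 : g (φ (Submodule.mkQ _ 1)) = Submodule.mkQ (x • (⊤ : Submodule R R)) t := by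
      have := congrArg (fun l => l (Submodule.mkQ _ 1)) hg
      simp only [LinearMap.comp_apply] at this
      rw [this]
      exact one_smul R (Submodule.mkQ (x • (⊤ : Submodule R R)) t)
    have h2 : Submodule.mkQ (x • (⊤ : Submodule R R)) (t - a * s) = 0 := by
      rw [map_sub, ← h1, ← hs, mul_comm, ← smul_eq_mul, map_smul, ha]
      conv_lhs => 
        enter [1, 2, 2]
        rw [← mul_one s, ← smul_eq_mul]
      rw [map_smul, map_smul, sub_self]
    obtain ⟨b, hb⟩ := (hmem _).mp h2
    exact ⟨a, b, by linear_combination hb⟩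

lemma dual_comm {R : Type} [CommRing R] (I : Ideal R) (f : Module.Dual R I) (x y : I) :
    (x : R) * f y = y * f x := by
  rw [← smul_eq_mul, ← smul_eq_mul, ← map_smul, ← map_smul]
  congr 1
  ext
  simp [mul_comm]

lemma dual_ext {R : Type} [CommRing R] (I : Ideal R) (x : R) (hx : x ∈ I)
    (reg : IsSMulRegular R x) (f g : Module.Dual R I) (h : f ⟨x, hx⟩ = g ⟨x, hx⟩) : f = g := by
  ext y
  apply reg
  have h1 := dual_comm I f ⟨x, hx⟩ y
  have h2 := dual_comm I g ⟨x, hx⟩ y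
  simp only [smul_eq_mul]
  rw [h] at h1
  exact h1.trans h2.symm

/-- For a one-dimensional non-regular Gorenstein local ring `R`, the minimal number of
generators of `Hom_R(m, R)` is exactly `2`. -/
theorem stmt_6 (R : Type) [CommRing R] [IsNoetherianRing R] [IsLocalRing R]
    (hG : IsGorensteinLocal R) (hdim : ringKrullDim R = 1) (hreg : ¬ IsRegularLocal R) :
    mu R (Module.Dual R (maximalIdeal R)) = 2 := by
  classical
  obtain ⟨x, hx, reg⟩ := exists_regular hG hdim
  obtain ⟨s, hs1, hs2, hs3⟩ := socle_mem hG hdim x hx reg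
  have hc : ∀ {a b : R}, x * a = x * b → a = b := fun h => reg h
  let ι : Module.Dual R (maximalIdeal R) := (maximalIdeal R).subtype
  choose c hcs using fun y : maximalIdeal R => hs2 y.1 y.2
  let F : Module.Dual R (maximalIdeal R) :=
    { toFun := c
      map_add' := fun y z => hc (by
        rw [mul_add, ← hcs, ← hcs, ← hcs, Submodule.coe_add, add_mul])
      map_smul' := fun r y => hc (by
        have h1 := hcs (r • y)
        have h2 := hcs y
        simp only [Submodule.coe_smul, smul_eq_mul, RingHom.id_apply] at h1 ⊢
        linear_combination r * h2 - h1) }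
  have hFx : F ⟨x, hx⟩ = s := (hc (hcs ⟨x, hx⟩)).symm
  have hιx : ι ⟨x, hx⟩ = x := rfl
  have hF : ∀ r : R, F ≠ r • ι := by
    intro r h
    apply hs1 r
    rw [← hFx, h, LinearMap.smul_apply, hιx, smul_eq_mul, mul_comm]
  have hgen : Submodule.span R (({ι, F} : Finset (Module.Dual R (maximalIdeal R))) : Set (Module.Dual R (maximalIdeal R))) = ⊤ := by
    rw [eq_top_iff]
    intro g _
    obtain ⟨a, b, hab⟩ := hs3 (g ⟨x, hx⟩) (fun y hy => ⟨g ⟨y, hy⟩, (dual_comm _ g ⟨x, hx⟩ ⟨y, hy⟩).symm⟩)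
    have : g = b • ι + a • F := by
      apply dual_ext _ x hx reg
      rw [hab, LinearMap.add_apply, LinearMap.smul_apply, LinearMap.smul_apply, hFx, hιx,
        smul_eq_mul, smul_eq_mul, add_comm]
    rw [Finset.coe_pair, Submodule.mem_span_pair]
    exact ⟨b, a, this.symm⟩
  have hne : ι ≠ F := fun h => hF 1 (by rw [one_smul, h])
  have hcyc : ∀ f : Module.Dual R (maximalIdeal R), Submodule.span R {f} ≠ ⊤ := by
    intro f hf
    have hall : ∀ g, ∃ a : R, a • f = g := fun g =>
      Submodule.mem_span_singleton.mp (hf ▸ Submodule.mem_top)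
    obtain ⟨a, ha⟩ := hall ι
    have haf : ∀ y : maximalIdeal R, a * f y = y := fun y => by
      exact congrArg (fun l => l y) ha
    by_cases hu : IsUnit a
    · obtain ⟨u, rfl⟩ := hu
      obtain ⟨b, hb⟩ := hall F
      apply hF (b * (↑u⁻¹ : R))
      rw [← ha, smul_smul, mul_assoc, Units.inv_mul, mul_one, hb]
    · have ham : a ∈ maximalIdeal R := hu
      by_cases hfm : ∃ y, IsUnit (f y)
      · obtain ⟨y, u, hy⟩ := hfm
        apply hreg
        refine ⟨{a}, ?_, ?_⟩
        · rw [Finset.coe_singleton]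
          apply le_antisymm
          · rw [Ideal.span_singleton_le_iff_mem]; exact ham
          · intro z hz
            rw [Ideal.mem_span_singleton]
            exact ⟨f ⟨z, hz⟩, (haf ⟨z, hz⟩).symm⟩
        · rw [hdim, Finset.card_singleton]; rfl
      · push Not at hfm
        have hle : maximalIdeal R ≤ maximalIdeal R • maximalIdeal R := by
          intro z hz
          have h1 := haf ⟨z, hz⟩
          simp only at h1
          rw [← h1, ← smul_eq_mul]
          exact Submodule.smul_mem_smul ham (hfm _)
        have hbot := Submodule.eq_bot_of_le_smul_of_le_jacobson_bot _ _
          (IsNoetherian.noetherian (maximalIdeal R)) hle (IsLocalRing.maximalIdeal_le_jacobson _)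
        have hx0 : x = 0 := by
          have := hbot ▸ hx
          simpa using this
        have : (1 : R) = 0 := hc (by rw [hx0]; simp)
        exact one_ne_zero this
  apply le_antisymm
  · exact Nat.sInf_le ⟨{ι, F}, Finset.card_pair hne, hgen⟩
  · refine le_csInf (s := {n : ℕ | ∃ s : Finset (Module.Dual R (maximalIdeal R)), s.card = n ∧
      Submodule.span R (s : Set (Module.Dual R (maximalIdeal R))) = ⊤})
      ⟨2, {ι, F}, Finset.card_pair hne, hgen⟩ ?_
    rintro n ⟨S, rfl, hS⟩
    by_contra hlt
    have hle : S.card ≤ 1 := by omega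
    obtain ⟨f, hf⟩ := Finset.card_le_one_iff_subset_singleton.mp hle
    apply hcyc f
    rw [eq_top_iff, ← hS]
    apply Submodule.span_mono
    exact_mod_cast hf
end
end

section
/- Let (R, m, k) be a commutative Noetherian local ring and G a finitely generated totally reflexive R-module. Then depth G = depth R. -/
open CategoryTheory IsLocalRing Pointwise

noncomputable section

lemma ext_bridge_s9 (R : Type) [CommRing R] (M N : Type) [AddCommGroup M] [Module R M]
    [AddCommGroup N] [Module R N] (i : ℕ) :
    Subsingleton (extGroup R M N i) ↔
      Subsingleton (Abelian.Ext (ModuleCat.of R M) (ModuleCat.of R N) i) := by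
  let P := projectiveResolution (ModuleCat.of R M)
  have h1 : Subsingleton (extGroup R M N i) ↔
      (P.complex.linearYonedaObj R (ModuleCat.of R N)).ExactAt i := by
    rw [HomologicalComplex.exactAt_iff_isZero_homology,
      ← (P.isoExt (R := R) i (ModuleCat.of R N)).isZero_iff, ModuleCat.isZero_iff_subsingleton]
  rw [h1]
  cases i with
  | zero =>
    rw [HomologicalComplex.exactAt_iff' _ 0 0 1 (by simp) (by simp),
      ShortComplex.moduleCat_exact_iff, Abelian.Ext.homEquiv₀.subsingleton_congr]
    constructor
    · intro h
      refine subsingleton_of_forall_eq 0 fun g => ?_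
      let s := (HomologicalComplex.singleObjXSelf (ComplexShape.down ℕ) 0 (ModuleCat.of R M)).hom
      obtain ⟨y, hy⟩ := h (P.π.f 0 ≫ (s ≫ g)) (by
        change P.complex.d 1 0 ≫ (P.π.f 0 ≫ (s ≫ g)) = 0
        rw [← Category.assoc, P.complex_d_comp_π_f_zero, Limits.zero_comp])
      have hd : P.complex.d 0 0 = 0 := P.complex.shape _ _ (by simp)
      have h0 : P.π.f 0 ≫ (s ≫ g) = 0 := by
        rw [← hy]
        change P.complex.d 0 0 ≫ (show P.complex.X 0 ⟶ ModuleCat.of R N from y) = 0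
        rw [hd, Limits.zero_comp]
      have h1 : s ≫ g = 0 := by
        rw [← cancel_epi (P.π.f 0), h0, Limits.comp_zero]
      rw [← cancel_epi s, h1, Limits.comp_zero]
    · intro h f hf
      let s := (HomologicalComplex.singleObjXSelf (ComplexShape.down ℕ) 0 (ModuleCat.of R M))
      refine ⟨0, ?_⟩
      rw [map_zero]
      have hf' : P.complex.d 1 0 ≫ (show P.complex.X 0 ⟶ ModuleCat.of R N from f) = 0 := hf
      obtain ⟨l, hl⟩ := Limits.CokernelCofork.IsColimit.desc' P.isColimitCokernelCofork _ hf'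
      have hl0 : s.inv ≫ l = 0 := h.elim _ _
      have hl1 : l = 0 := (cancel_epi s.inv).1 (hl0.trans Limits.comp_zero.symm)
      rw [hl1, Limits.comp_zero] at hl
      exact hl
  | succ n =>
    rw [HomologicalComplex.exactAt_iff' _ n (n+1) (n+2) (by simp) (by simp),
      ShortComplex.moduleCat_exact_iff]
    constructor
    · intro h
      refine subsingleton_of_forall_eq 0 fun x => ?_
      obtain ⟨f, hf, rfl⟩ := P.extMk_surjective x (n + 2) rfl
      rw [P.extMk_eq_zero_iff f (n+2) rfl hf n rfl]
      exact h f hf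
    · intro h f hf
      exact (P.extMk_eq_zero_iff f (n+2) rfl hf n rfl).1 (Subsingleton.elim _ _)

section
variable {R : Type} [CommRing R]

lemma ext_joint (T : ModuleCat.{0} R) (m i : ℕ)
    (α : Abelian.Ext T (ModuleCat.of R (Module.Dual R (Fin m → R))) i)
    (h : ∀ j : Fin m, α.comp (Abelian.Ext.mk₀ (ModuleCat.ofHom (Y := R)
      (Module.Dual.eval R (Fin m → R) (Pi.single j 1)))) (add_zero i) = 0) : α = 0 := by
  have key : 𝟙 (ModuleCat.of R (Module.Dual R (Fin m → R))) =
      ∑ j : Fin m, ModuleCat.ofHom (Y := R) (Module.Dual.eval R (Fin m → R) (Pi.single j 1)) ≫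
        ModuleCat.ofHom (LinearMap.toSpanSingleton R (Module.Dual R (Fin m → R))
          (LinearMap.proj j)) := by
    ext f x
    simp [ModuleCat.hom_sum, LinearMap.sum_apply, Pi.single_apply]
  rw [← Abelian.Ext.comp_mk₀_id α, key, Abelian.Ext.mk₀_sum, Abelian.Ext.comp_sum]
  refine Finset.sum_eq_zero fun j _ => ?_
  rw [← Abelian.Ext.mk₀_comp_mk₀, ← Abelian.Ext.comp_assoc_of_third_deg_zero, h j,
    Abelian.Ext.zero_comp]

/-- the dual sequence -/
abbrev dualSC {X : Type} [AddCommGroup X] [Module R X] {n : ℕ} (p : (Fin n → R) →ₗ[R] X) :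
    ShortComplex (ModuleCat.{0} R) :=
  ShortComplex.mk (X₁ := ModuleCat.of R (Module.Dual R X))
    (X₂ := ModuleCat.of R (Module.Dual R (Fin n → R)))
    (X₃ := ModuleCat.of R (Module.Dual R (LinearMap.ker p)))
    (ModuleCat.ofHom p.dualMap) (ModuleCat.ofHom (LinearMap.ker p).subtype.dualMap) (by
      ext f x
      simp)

lemma dualSC_shortExact {X : Type} [AddCommGroup X] [Module R X] {n : ℕ}
    (p : (Fin n → R) →ₗ[R] X) (hp : Function.Surjective p)
    (h : Subsingleton (Abelian.Ext (ModuleCat.of R X) (ModuleCat.of R R) 1)) :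
    (dualSC p).ShortExact := by
  have hS := LinearMap.shortExact_shortComplexKer hp
  refine ModuleCat.shortComplex_shortExact _ ?_ ?_ ?_
  · intro f
    constructor
    · intro hf
      have hf' : LinearMap.ker p ≤ LinearMap.ker f := fun x hx =>
        LinearMap.congr_fun (show (LinearMap.ker p).subtype.dualMap f = 0 from hf) ⟨x, hx⟩
      refine ⟨(Submodule.liftQ _ f hf') ∘ₗ (p.quotKerEquivOfSurjective hp).symm.toLinearMap, ?_⟩
      refine LinearMap.ext fun x => ?_
      have hx : (p.quotKerEquivOfSurjective hp).symm (p x) = Submodule.Quotient.mk x := by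
        rw [LinearEquiv.symm_apply_eq]
        rfl
      change (Submodule.liftQ _ f hf') ((p.quotKerEquivOfSurjective hp).symm (p x)) = f x
      rw [hx]
      rfl
    · rintro ⟨g, rfl⟩
      refine LinearMap.ext fun x => ?_
      change g (p x.1) = 0
      rw [x.2, map_zero]
  · exact LinearMap.dualMap_injective_of_surjective hp
  · intro f
    obtain ⟨y, hy⟩ := Abelian.Ext.contravariant_sequence_exact₁ hS (ModuleCat.of R R)
      (Abelian.Ext.mk₀ (ModuleCat.ofHom f)) rfl (h.elim _ _)
    obtain ⟨y, rfl⟩ := (Abelian.Ext.mk₀_bijective _ _).2 y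
    rw [Abelian.Ext.mk₀_comp_mk₀] at hy
    have := (Abelian.Ext.mk₀_bijective _ _).1 hy
    exact ⟨y.hom, congrArg ModuleCat.Hom.hom this⟩

lemma ext_ker {X : Type} [AddCommGroup X] [Module R X] {n : ℕ}
    (p : (Fin n → R) →ₗ[R] X) (hp : Function.Surjective p)
    (h : ∀ i, 1 ≤ i → Subsingleton (Abelian.Ext (ModuleCat.of R X) (ModuleCat.of R R) i)) :
    ∀ i, 1 ≤ i → Subsingleton
      (Abelian.Ext (ModuleCat.of R (LinearMap.ker p)) (ModuleCat.of R R) i) := by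
  intro i hi
  have hS := LinearMap.shortExact_shortComplexKer hp
  refine subsingleton_of_forall_eq 0 fun x => ?_
  obtain ⟨i, rfl⟩ : ∃ j, i = j + 1 := ⟨i - 1, by omega⟩
  have := h (1 + (i + 1)) (by omega)
  obtain ⟨y, rfl⟩ := Abelian.Ext.contravariant_sequence_exact₁ hS (ModuleCat.of R R) x rfl
    (Subsingleton.elim (α := Abelian.Ext (ModuleCat.of R X) (ModuleCat.of R R) (1 + (i + 1))) _ _)
  have : Projective (p.shortComplexKer).X₂ :=
    inferInstanceAs (Projective (ModuleCat.of R (Fin n → R)))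
  rw [Abelian.Ext.eq_zero_of_projective y, Abelian.Ext.comp_zero]

lemma ext_dual_vanish [IsNoetherianRing R] (T : ModuleCat.{0} R) (i : ℕ) :
    ∀ (X : Type) [AddCommGroup X] [Module R X] [Module.Finite R X]
    (_ : ∀ i, 1 ≤ i → Subsingleton (Abelian.Ext (ModuleCat.of R X) (ModuleCat.of R R) i))
    (_ : ∀ j, j ≤ i → Subsingleton (Abelian.Ext T (ModuleCat.of R R) j)),
    Subsingleton (Abelian.Ext T (ModuleCat.of R (Module.Dual R X)) i) := by
  induction i with
  | zero =>
    intro X _ _ _ hX hT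
    obtain ⟨n, p, hp⟩ := Module.Finite.exists_fin' R X
    have hD := dualSC_shortExact p hp (hX 1 le_rfl)
    have := hD.mono_f
    refine subsingleton_of_forall_eq 0 fun x => ?_
    apply Abelian.Ext.postcomp_mk₀_injective_of_mono T (dualSC p).f
    rw [map_zero]
    refine ext_joint T n 0 _ fun j => ?_
    have := hT 0 le_rfl
    exact Subsingleton.elim _ _
  | succ i ih =>
    intro X _ _ _ hX hT
    obtain ⟨n, p, hp⟩ := Module.Finite.exists_fin' R X
    have hD := dualSC_shortExact p hp (hX 1 le_rfl)
    refine subsingleton_of_forall_eq 0 fun x => ?_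
    have := hT (i+1) le_rfl
    obtain ⟨y, rfl⟩ := Abelian.Ext.covariant_sequence_exact₁ T hD x
      (ext_joint T n (i+1) _ fun j => Subsingleton.elim _ _) rfl
    have := ih (LinearMap.ker p) (ext_ker p hp hX) (fun j hj => hT j (by omega))
    have hy : y = 0 := Subsingleton.elim
      (α := Abelian.Ext T (ModuleCat.of R (Module.Dual R (LinearMap.ker p))) i) _ _
    rw [hy, Abelian.Ext.zero_comp]

lemma exists_functional [IsLocalRing R] (X : Type) [AddCommGroup X] [Module R X]
    [Module.Finite R X] [Nontrivial X] {n : ℕ}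
    (p : (Fin n → R) →ₗ[R] X) (hp : Function.Surjective p) :
    ∃ a : (Fin n → R) →ₗ[R] R, (∀ x, p x = 0 → a x ∈ maximalIdeal R) ∧ ∃ b, IsUnit (a b) := by
  obtain ⟨N, hN⟩ := IsCoatomic.exists_coatom (α := Submodule R X)
  have hs : IsSimpleModule R (X ⧸ N) := isSimpleModule_iff_isCoatom.2 hN
  obtain ⟨I, hI, ⟨e⟩⟩ := isSimpleModule_iff_quot_maximal.1 hs
  obtain rfl := IsLocalRing.eq_maximalIdeal hI
  let φ : (Fin n → R) →ₗ[R] (R ⧸ maximalIdeal R) := e.toLinearMap ∘ₗ N.mkQ ∘ₗ p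
  have hφ : Function.Surjective φ :=
    e.surjective.comp ((Submodule.mkQ_surjective N).comp hp)
  obtain ⟨a, ha⟩ := Module.projective_lifting_property (maximalIdeal R).mkQ φ
    (Submodule.mkQ_surjective _)
  have ha' : ∀ x, Ideal.Quotient.mk (maximalIdeal R) (a x) = φ x := fun x => LinearMap.congr_fun ha x
  refine ⟨a, fun x hx => ?_, ?_⟩
  · rw [← Ideal.Quotient.eq_zero_iff_mem, ha']
    simp [φ, hx]
  · obtain ⟨b, hb⟩ := hφ 1
    refine ⟨b, ?_⟩
    by_contra h
    have h2 : a b ∈ maximalIdeal R := h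
    rw [← Ideal.Quotient.eq_zero_iff_mem, ha', hb] at h2
    exact one_ne_zero h2

lemma ext_dual_nonvanish [IsNoetherianRing R] [IsLocalRing R] (d : ℕ)
    (X : Type) [AddCommGroup X] [Module R X] [Module.Finite R X] [Nontrivial X]
    (hX : ∀ i, 1 ≤ i → Subsingleton (Abelian.Ext (ModuleCat.of R X) (ModuleCat.of R R) i))
    (hlt : ∀ j, j < d → Subsingleton
      (Abelian.Ext (ModuleCat.of R (ResidueField R)) (ModuleCat.of R R) j))
    (hd : Nontrivial (Abelian.Ext (ModuleCat.of R (ResidueField R)) (ModuleCat.of R R) d)) :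
    Nontrivial (Abelian.Ext (ModuleCat.of R (ResidueField R))
      (ModuleCat.of R (Module.Dual R X)) d) := by
  obtain ⟨n, p, hp⟩ := Module.Finite.exists_fin' R X
  have hD := dualSC_shortExact p hp (hX 1 le_rfl)
  obtain ⟨m, q, hq⟩ := Module.Finite.exists_fin' R (LinearMap.ker p)
  have hK := ext_ker p hp hX
  have hD2 := dualSC_shortExact q hq (hK 1 le_rfl)
  have hK2 := ext_ker q hq hK
  obtain ⟨a, ha, b, hb⟩ := exists_functional X p hp
  obtain ⟨e, he⟩ := exists_ne
    (0 : Abelian.Ext (ModuleCat.of R (ResidueField R)) (ModuleCat.of R R) d)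
  -- the element of `Ext^d(k, F*)`
  let A : ModuleCat.of R R ⟶ ModuleCat.of R (Module.Dual R (Fin n → R)) :=
    ModuleCat.ofHom (LinearMap.toSpanSingleton R (Module.Dual R (Fin n → R)) a)
  have hcomp : ∀ (Z : ModuleCat R) (f : ModuleCat.of R (Module.Dual R (Fin n → R)) ⟶ Z),
      (e.comp (Abelian.Ext.mk₀ A) (add_zero d)).comp (Abelian.Ext.mk₀ f) (add_zero d) =
        e.comp (Abelian.Ext.mk₀ (A ≫ f)) (add_zero d) := by
    intro Z f
    rw [Abelian.Ext.comp_assoc_of_third_deg_zero, Abelian.Ext.mk₀_comp_mk₀]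
  have hscal : ∀ r : R, e.comp (Abelian.Ext.mk₀ (r • 𝟙 (ModuleCat.of R R))) (add_zero d) = r • e :=
    fun r => (Abelian.Ext.smul_eq_comp_mk₀ e r).symm
  have hkill : ∀ r ∈ maximalIdeal R, r • e = 0 := by
    intro r hr
    have h0 : r • 𝟙 (ModuleCat.of R (ResidueField R)) = 0 := by
      ext x
      change r • (show ResidueField R from x) = 0
      rw [Algebra.smul_def]
      have : algebraMap R (ResidueField R) r = 0 := (IsLocalRing.residue_eq_zero_iff r).2 hr
      rw [this, zero_mul]
    have : r • e = (Abelian.Ext.mk₀ (r • 𝟙 (ModuleCat.of R (ResidueField R)))).comp e (zero_add d) := by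
      simp [Abelian.Ext.mk₀_smul]
    rw [this, h0, Abelian.Ext.mk₀_zero, Abelian.Ext.zero_comp]
  set ε := e.comp (Abelian.Ext.mk₀ A) (add_zero d) with hε
  have hne : ε ≠ 0 := by
    intro h0
    have h1 := hcomp (ModuleCat.of R R) (ModuleCat.ofHom (Module.Dual.eval R (Fin n → R) b))
    have h2 : A ≫ ModuleCat.ofHom (Y := R) (Module.Dual.eval R (Fin n → R) b) =
        (a b) • 𝟙 (ModuleCat.of R R) := by
      ext
      simp [A]
    erw [h2, hscal, h0, Abelian.Ext.zero_comp] at h1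
    exact he (hb.smul_eq_zero.1 h1.symm)
  have hz : (ε.comp (Abelian.Ext.mk₀ (dualSC p).g) (add_zero d)).comp
      (Abelian.Ext.mk₀ (dualSC q).f) (add_zero d) = 0 := by
    refine ext_joint _ m d _ fun j => ?_
    rw [hcomp, Abelian.Ext.comp_assoc_of_third_deg_zero, Abelian.Ext.comp_assoc_of_third_deg_zero,
      Abelian.Ext.mk₀_comp_mk₀, Abelian.Ext.mk₀_comp_mk₀]
    have h2 : (A ≫ (dualSC p).g) ≫ (dualSC q).f ≫ ModuleCat.ofHom (Y := R)
        (Module.Dual.eval R (Fin m → R) (Pi.single j 1)) =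
        (a (q (Pi.single j 1))) • 𝟙 (ModuleCat.of R R) := by
      ext
      simp [A, dualSC]
    rw [h2, hscal]
    exact hkill _ (ha _ (q (Pi.single j 1)).2)
  have hz1 : ε.comp (Abelian.Ext.mk₀ (dualSC p).g) (add_zero d) = 0 := by
    cases d with
    | zero =>
      have := hD2.mono_f
      apply Abelian.Ext.postcomp_mk₀_injective_of_mono _ (dualSC q).f
      rw [map_zero]
      exact hz
    | succ d =>
      obtain ⟨y, hy⟩ := Abelian.Ext.covariant_sequence_exact₁ _ hD2 _ hz rfl
      have := ext_dual_vanish (ModuleCat.of R (ResidueField R)) d (LinearMap.ker q) hK2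
        (fun j hj => hlt j (by omega))
      have hy0 : y = 0 := Subsingleton.elim (α := Abelian.Ext (ModuleCat.of R (ResidueField R))
        (ModuleCat.of R (Module.Dual R (LinearMap.ker q))) d) _ _
      rw [← hy, hy0, Abelian.Ext.zero_comp]
  obtain ⟨y, hy⟩ := Abelian.Ext.covariant_sequence_exact₂ _ hD ε hz1
  refine ⟨y, 0, ?_⟩
  rintro rfl
  exact hne (by rw [← hy, Abelian.Ext.zero_comp])

end

/-- Auslander–Bridger formula in Gorenstein dimension zero: a finitely generated totally
reflexive module `G` over a Noetherian local ring satisfies `depth G = depth R`. -/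
theorem stmt_9 (R : Type) [CommRing R] [IsNoetherianRing R] [IsLocalRing R]
    (G : Type) [AddCommGroup G] [Module R G] [Module.Finite R G] [Nontrivial G]
    (hG : IsTotallyReflexive R G) :
    eDepth R G = eDepth R R := by
  obtain ⟨-, hbij, -, hE⟩ := hG
  let e : G ≃ₗ[R] Module.Dual R (Module.Dual R G) := LinearEquiv.ofBijective _ hbij
  have hnt : Nontrivial (Module.Dual R G) := by
    by_contra h
    rw [not_nontrivial_iff_subsingleton] at h
    have : Subsingleton (Module.Dual R (Module.Dual R G)) :=
      subsingleton_of_forall_eq 0 fun f => by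
        ext x
        rw [Subsingleton.elim x 0]; simp
    exact not_subsingleton G e.toEquiv.subsingleton
  have hX : ∀ i, 1 ≤ i → Subsingleton
      (Abelian.Ext (ModuleCat.of R (Module.Dual R G)) (ModuleCat.of R R) i) :=
    fun i hi => (ext_bridge_s9 R _ _ i).1 (hE i hi)
  have hiso : ∀ i, Nontrivial (extGroup R (ResidueField R) G i) ↔ Nontrivial
      (Abelian.Ext (ModuleCat.of R (ResidueField R))
        (ModuleCat.of R (Module.Dual R (Module.Dual R G))) i) := by
    intro i
    have h1 : extGroup R (ResidueField R) G i ≃ extGroup R (ResidueField R)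
      (Module.Dual R (Module.Dual R G)) i :=
      (((Ext R (ModuleCat R) i).obj (Opposite.op (ModuleCat.of R (ResidueField R)))).mapIso
        e.toModuleIso).toLinearEquiv.toEquiv
    rw [h1.nontrivial_congr, ← not_iff_not, not_nontrivial_iff_subsingleton,
      not_nontrivial_iff_subsingleton, ext_bridge_s9]
  have hR : ∀ i, Nontrivial (extGroup R (ResidueField R) R i) ↔ Nontrivial
      (Abelian.Ext (ModuleCat.of R (ResidueField R)) (ModuleCat.of R R) i) := by
    intro i
    rw [← not_iff_not, not_nontrivial_iff_subsingleton,
      not_nontrivial_iff_subsingleton, ext_bridge_s9]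
  unfold eDepth
  apply le_antisymm
  · refine le_sInf ?_
    rintro _ ⟨i, hi, rfl⟩
    classical
    have hex : ∃ i, Nontrivial (Abelian.Ext (ModuleCat.of R (ResidueField R))
      (ModuleCat.of R R) i) := ⟨i, (hR i).1 hi⟩
    have hle : Nat.find hex ≤ i := Nat.find_min' hex ((hR i).1 hi)
    refine le_trans (sInf_le ⟨Nat.find hex, ?_, rfl⟩) (Nat.cast_le.2 hle)
    exact (hiso _).2 (ext_dual_nonvanish _ _ hX
      (fun j hj => not_nontrivial_iff_subsingleton.1 (Nat.find_min hex hj)) (Nat.find_spec hex))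
  · refine le_sInf ?_
    rintro _ ⟨i, hi, rfl⟩
    have hi' := (hiso i).1 hi
    by_contra hcon
    rw [not_le] at hcon
    refine not_subsingleton_iff_nontrivial.2 hi' (ext_dual_vanish _ i _ hX fun j hj => ?_)
    by_contra hj2
    rw [not_subsingleton_iff_nontrivial] at hj2
    exact absurd (lt_of_lt_of_le hcon (sInf_le ⟨j, (hR j).2 hj2, rfl⟩))
      (not_lt.2 (Nat.cast_le.2 hj))
end
end

section
/- Let (R, m, k) be a commutative Noetherian local ring and let M, N be finitely generated nonzero R-modules with pd_R(M) < ∞. Set q = sup{ i ≥ 0 : Tor_i^R(M,N) ≠ 0 } and assume q < ∞. Then for every prime p ∈ Supp(M ⊗_R N), depth R_p - depth M_p - depth N_p ≤ q. -/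
open CategoryTheory IsLocalRing Pointwise

noncomputable section

section ExtCompare

variable {R : Type} [CommRing R]

/-- Old Ext vanishes iff the cohomology of the Hom complex vanishes. -/
lemma oldExt_subsingleton_iff_exact {X : ModuleCat.{0} R} (P : ProjectiveResolution X) (Y : ModuleCat.{0} R) (n : ℕ) :
    Subsingleton (((Ext R (ModuleCat R) n).obj (Opposite.op X)).obj Y) ↔
      (P.complex.linearYonedaObj R Y).ExactAt n := by
  rw [HomologicalComplex.exactAt_iff_isZero_homology, ← (P.isoExt (R := R) n Y).isZero_iff,
    ModuleCat.isZero_iff_subsingleton]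

lemma oldExt_succ_iff {X : ModuleCat.{0} R} (P : ProjectiveResolution X) (Y : ModuleCat.{0} R) (n : ℕ) :
    Subsingleton (((Ext R (ModuleCat R) (n+1)).obj (Opposite.op X)).obj Y) ↔
      ∀ f : P.complex.X (n+1) ⟶ Y, P.complex.d (n+2) (n+1) ≫ f = 0 →
        ∃ g : P.complex.X n ⟶ Y, P.complex.d (n+1) n ≫ g = f := by
  rw [oldExt_subsingleton_iff_exact P,
    HomologicalComplex.exactAt_iff' _ n (n+1) (n+2) (by simp) (by simp),
    ShortComplex.moduleCat_exact_iff]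
  rfl

lemma oldExt_zero_iff {X : ModuleCat.{0} R} (P : ProjectiveResolution X) (Y : ModuleCat.{0} R) :
    Subsingleton (((Ext R (ModuleCat R) 0).obj (Opposite.op X)).obj Y) ↔
      ∀ f : P.complex.X 0 ⟶ Y, P.complex.d 1 0 ≫ f = 0 → f = 0 := by
  rw [oldExt_subsingleton_iff_exact P,
    HomologicalComplex.exactAt_iff' _ 0 0 1 (by simp) (by simp),
    ShortComplex.moduleCat_exact_iff]
  constructor
  · intro h f hf
    obtain ⟨g, hg⟩ := h f hf
    have : (P.complex.linearYonedaObj R Y).d 0 0 = 0 :=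
      HomologicalComplex.shape _ _ _ (by simp)
    have h2 : ((P.complex.linearYonedaObj R Y).d 0 0).hom g = f := hg
    rw [this] at h2
    exact h2.symm
  · intro h f hf
    exact ⟨0, by rw [h f hf]; exact map_zero _⟩

lemma zero_aux (T : ShortComplex (ModuleCat.{0} R)) (hex : T.Exact) (e : Epi T.g)
    (Y : ModuleCat.{0} R) :
    (∀ f : T.X₂ ⟶ Y, T.f ≫ f = 0 → f = 0) ↔ Subsingleton (T.X₃ ⟶ Y) := by
  constructor
  · intro h
    refine subsingleton_of_forall_eq 0 fun a => ?_
    rw [← cancel_epi T.g, Limits.comp_zero]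
    exact h _ (by rw [← Category.assoc, T.zero, Limits.zero_comp])
  · intro h f hf
    let c := hex.gIsCokernel
    have : f = T.g ≫ c.desc (Limits.CokernelCofork.ofπ f hf) :=
      (c.fac (Limits.CokernelCofork.ofπ f hf) Limits.WalkingParallelPair.one).symm
    rw [this, Subsingleton.elim (α := T.X₃ ⟶ Y) (c.desc (Limits.CokernelCofork.ofπ f hf)) 0]
    exact Limits.comp_zero

lemma newExt_iff (X Y : ModuleCat.{0} R) (n : ℕ) :
    Subsingleton (((Ext R (ModuleCat R) n).obj (Opposite.op X)).obj Y) ↔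
      Subsingleton (Abelian.Ext.{0} X Y n) := by
  let P : ProjectiveResolution X := ProjectiveResolution.of X
  rcases n with _ | n
  · rw [oldExt_zero_iff P, (Abelian.Ext.homEquiv₀ (X := X) (Y := Y)).subsingleton_congr]
    have e : Epi (P.π.f 0) := inferInstance
    exact zero_aux _ P.exact₀ e Y
  · rw [oldExt_succ_iff P]
    constructor
    · intro h
      refine subsingleton_of_forall_eq 0 fun x => ?_
      obtain ⟨f, hf, rfl⟩ := P.extMk_surjective x (n+2) rfl
      rw [P.extMk_eq_zero_iff f (n+2) rfl hf n rfl]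
      exact h f hf
    · intro h f hf
      rw [← P.extMk_eq_zero_iff f (n+2) rfl hf n rfl]
      exact Subsingleton.elim _ _

/-- Vanishing of `Ext^i(k, A)`. -/
def EZ (R : Type) [CommRing R] (k A : Type) [AddCommGroup k] [Module R k]
    [AddCommGroup A] [Module R A] (i : ℕ) : Prop :=
  Subsingleton (Abelian.Ext.{0} (ModuleCat.of R k) (ModuleCat.of R A) i)

lemma EZ_iff (k A : Type) [AddCommGroup k] [Module R k]
    [AddCommGroup A] [Module R A] (i : ℕ) : Subsingleton (extGroup R k A i) ↔ EZ R k A i :=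
  newExt_iff _ _ _

variable {k A B C : Type} [AddCommGroup k] [Module R k]
    [AddCommGroup A] [Module R A] [AddCommGroup B] [Module R B] [AddCommGroup C] [Module R C]

lemma EZ.congr (e : A ≃ₗ[R] B) (i : ℕ) (h : EZ R k A i) : EZ R k B i := by
  unfold EZ at *
  refine subsingleton_of_forall_eq 0 fun x => ?_
  have h1 : x.comp (Abelian.Ext.mk₀ (ModuleCat.ofHom e.symm.toLinearMap)) (add_zero i) = 0 :=
    Subsingleton.elim _ _
  have h2 := congrArg (fun y => y.comp (Abelian.Ext.mk₀ (ModuleCat.ofHom e.toLinearMap)) (add_zero i)) h1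
  simp only [Abelian.Ext.comp_assoc_of_third_deg_zero, Abelian.Ext.mk₀_comp_mk₀, Abelian.Ext.zero_comp] at h2
  rw [← ModuleCat.ofHom_comp] at h2
  simpa using h2

/-- the short complex -/
def mkSC (f : A →ₗ[R] B) (g : B →ₗ[R] C) (h : Function.Exact f g) : ShortComplex (ModuleCat.{0} R) :=
  ShortComplex.mk (ModuleCat.ofHom f) (ModuleCat.ofHom g) (by
    ext x; exact h.apply_apply_eq_zero x)

lemma mkSC_shortExact (f : A →ₗ[R] B) (g : B →ₗ[R] C) (h : Function.Exact f g)
    (hf : Function.Injective f) (hg : Function.Surjective g) : (mkSC f g h).ShortExact where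
  exact := (ShortComplex.ShortExact.moduleCat_exact_iff_function_exact _).2 h
  mono_f := (ModuleCat.mono_iff_injective _).2 hf
  epi_g := (ModuleCat.epi_iff_surjective _).2 hg

/-- Postcomposition is injective. -/
def EInj (k : Type) [AddCommGroup k] [Module R k] (f : A →ₗ[R] B) (i : ℕ) : Prop :=
  ∀ x : Abelian.Ext.{0} (ModuleCat.of R k) (ModuleCat.of R A) i,
    x.comp (Abelian.Ext.mk₀ (ModuleCat.ofHom f)) (add_zero i) = 0 → x = 0

lemma EInj_zero (f : A →ₗ[R] B) (hf : Function.Injective f) : EInj k f 0 := by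
  intro x hx
  have : Mono (ModuleCat.ofHom f) := (ModuleCat.mono_iff_injective _).2 hf
  apply Abelian.Ext.postcomp_mk₀_injective_of_mono (ModuleCat.of R k) (ModuleCat.ofHom f)
  simpa using hx

lemma EInj.EZ {f : A →ₗ[R] B} {i : ℕ} (hf : EInj k f i) (h : EZ R k B i) : EZ R k A i := by
  unfold _root_.EZ at *
  exact subsingleton_of_forall_eq 0 fun x => hf x (Subsingleton.elim _ _)

lemma EInj_succ (f : A →ₗ[R] B) (g : B →ₗ[R] C) (h : Function.Exact f g)
    (hf : Function.Injective f) (hg : Function.Surjective g) {i : ℕ} (hC : EZ R k C i) :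
    EInj k f (i+1) := by
  intro x hx
  obtain ⟨y, rfl⟩ := Abelian.Ext.covariant_sequence_exact₁ _ (mkSC_shortExact f g h hf hg) x hx rfl
  have : Subsingleton (Abelian.Ext.{0} (ModuleCat.of R k) (mkSC f g h).X₃ i) := hC
  rw [Subsingleton.elim y 0]
  exact Abelian.Ext.zero_comp (C := ModuleCat.{0} R) _ _ _ _ _

lemma EZ_quot (f : A →ₗ[R] B) (g : B →ₗ[R] C) (h : Function.Exact f g)
    (hf : Function.Injective f) (hg : Function.Surjective g) {i : ℕ} (hB : EZ R k B i)
    (hA : EZ R k A (i+1)) : EZ R k C i := by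
  refine subsingleton_of_forall_eq 0 fun x => ?_
  have s1 : Subsingleton (Abelian.Ext.{0} (ModuleCat.of R k) (mkSC f g h).X₁ (i+1)) := hA
  have s2 : Subsingleton (Abelian.Ext.{0} (ModuleCat.of R k) (mkSC f g h).X₂ i) := hB
  obtain ⟨y, hy⟩ := Abelian.Ext.covariant_sequence_exact₃ _ (mkSC_shortExact f g h hf hg) (n₀ := i) x rfl
    (Subsingleton.elim _ _)
  rw [← hy, Subsingleton.elim y 0]
  exact Abelian.Ext.zero_comp (C := ModuleCat.{0} R) _ _ _ _ _

/-- linear maps killing Ext -/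
def EKill (k : Type) [AddCommGroup k] [Module R k] (f : A →ₗ[R] B) (i : ℕ) : Prop :=
  ∀ x : Abelian.Ext.{0} (ModuleCat.of R k) (ModuleCat.of R A) i,
    x.comp (Abelian.Ext.mk₀ (ModuleCat.ofHom f)) (add_zero i) = 0

lemma EKill.add {f g : A →ₗ[R] B} {i : ℕ} (hf : EKill k f i) (hg : EKill k g i) : EKill k (f + g) i := by
  intro x
  rw [ModuleCat.ofHom_add, Abelian.Ext.mk₀_add, Abelian.Ext.comp_add, hf x, hg x, add_zero]

lemma EKill_zero {i : ℕ} : EKill k (0 : A →ₗ[R] B) i := by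
  intro x
  have : ModuleCat.ofHom (0 : A →ₗ[R] B) = 0 := rfl
  rw [this, Abelian.Ext.mk₀_zero, Abelian.Ext.comp_zero]

lemma EKill.sum {ι : Type*} (s : Finset ι) {f : ι → A →ₗ[R] B} {i : ℕ} (hf : ∀ a ∈ s, EKill k (f a) i) :
    EKill k (∑ a ∈ s, f a) i := by
  classical
  induction s using Finset.induction_on with
  | empty => simpa using EKill_zero
  | insert a s ha ih =>
    rw [Finset.sum_insert ha]
    exact (hf a (by simp)).add (ih fun b hb => hf b (by simp [hb]))

lemma EKill_comp {f : A →ₗ[R] B} {g : B →ₗ[R] C} {i : ℕ} (hf : EZ R k B i) : EKill k (g ∘ₗ f) i := by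
  intro x
  rw [ModuleCat.ofHom_comp, ← Abelian.Ext.mk₀_comp_mk₀, ← Abelian.Ext.comp_assoc_of_third_deg_zero]
  have s2 : Subsingleton (Abelian.Ext.{0} (ModuleCat.of R k) (ModuleCat.of R B) i) := hf
  rw [Subsingleton.elim (Abelian.Ext.comp x _ _) 0, Abelian.Ext.zero_comp]

lemma EKill_smul {f : A →ₗ[R] B} {i : ℕ} (r : R) (hr : ∀ x : k, r • x = 0) : EKill k (r • f) i := by
  intro x
  have h0 : r • x = 0 := by
    have : r • (𝟙 (ModuleCat.of R k)) = 0 := by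
      ext y; exact hr y
    rw [← Abelian.Ext.mk₀_id_comp x, ← Abelian.Ext.smul_comp, ← Abelian.Ext.mk₀_smul, this, 
      Abelian.Ext.mk₀_zero, Abelian.Ext.zero_comp]
  have h1 : ModuleCat.ofHom (r • f) = r • ModuleCat.ofHom f := rfl
  rw [h1, Abelian.Ext.mk₀_smul, Abelian.Ext.comp_smul, ← Abelian.Ext.smul_comp, h0, Abelian.Ext.zero_comp]

lemma EKill_id {i : ℕ} (h : EKill k (LinearMap.id : A →ₗ[R] A) i) : EZ R k A i := by
  refine subsingleton_of_forall_eq 0 fun x => ?_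
  have := h x
  rw [ModuleCat.ofHom_id, Abelian.Ext.comp_mk₀_id] at this
  exact this

/-- if `f` is `EInj`, `f ∘ s` kills and `s` has a retraction, then Ext of source vanishes -/
lemma EZ_of_kill {f : B →ₗ[R] C} {s : A →ₗ[R] B} {r : B →ₗ[R] A} {i : ℕ} (hf : EInj k f i)
    (hs : r ∘ₗ s = LinearMap.id) (hk : EKill k (f ∘ₗ s) i) : EZ R k A i := by
  apply EKill_id
  rw [← hs]
  intro x
  rw [ModuleCat.ofHom_comp, ← Abelian.Ext.mk₀_comp_mk₀, ← Abelian.Ext.comp_assoc_of_third_deg_zero]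
  have := hk x
  rw [ModuleCat.ofHom_comp, ← Abelian.Ext.mk₀_comp_mk₀, ← Abelian.Ext.comp_assoc_of_third_deg_zero] at this
  rw [hf _ this, Abelian.Ext.zero_comp]

end ExtCompare
section LocalPart

open TensorProduct

variable {S : Type} [CommRing S]

lemma EZ_tensor {k F N : Type} [AddCommGroup k] [Module S k] [AddCommGroup F] [Module S F]
    [AddCommGroup N] [Module S N] [Module.Free S F] [Module.Finite S F] {i : ℕ}
    (h : EZ S k N i) : EZ S k (F ⊗[S] N) i := by
  let b := Module.Free.chooseBasis S F
  apply EKill_id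
  have : (LinearMap.id : F ⊗[S] N →ₗ[S] F ⊗[S] N) =
      ∑ a, (TensorProduct.mk S F N (b a)) ∘ₗ
        ((TensorProduct.lid S N).toLinearMap ∘ₗ (LinearMap.rTensor N (b.coord a))) := by
    apply TensorProduct.ext'
    intro x y
    simp only [LinearMap.id_apply, LinearMap.sum_apply, LinearMap.comp_apply,
      LinearMap.rTensor_tmul, LinearEquiv.coe_coe, TensorProduct.lid_tmul, TensorProduct.mk_apply,
      Module.Basis.coord_apply]
    simp_rw [← TensorProduct.smul_tmul, ← TensorProduct.sum_tmul, b.sum_repr]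
  rw [this]
  exact EKill.sum _ fun a _ => EKill_comp h

lemma EZ_free {k F : Type} [AddCommGroup k] [Module S k] [AddCommGroup F] [Module S F]
    [Module.Free S F] [Module.Finite S F] {i : ℕ} (h : EZ S k S i) : EZ S k F i :=
  (EZ_tensor (F := F) h).congr (TensorProduct.rid S F) i

variable [IsLocalRing S]

lemma EKill_tmul {F N : Type} [AddCommGroup F] [Module S F]
    [AddCommGroup N] [Module S N] {i : ℕ} (y : F) (hy : y ∈ maximalIdeal S • (⊤ : Submodule S F)) :
    EKill (ResidueField S) (TensorProduct.mk S F N y) i := by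
  induction hy using Submodule.smul_induction_on' with
  | smul r hr n hn =>
    rw [map_smul]
    apply EKill_smul
    intro x
    obtain ⟨x, rfl⟩ := IsLocalRing.residue_surjective x
    rw [← IsLocalRing.ResidueField.algebraMap_eq, Algebra.smul_def, 
      IsLocalRing.ResidueField.algebraMap_eq, (IsLocalRing.residue_eq_zero_iff r).2 hr, zero_mul]
  | add x hx y hy h1 h2 => rw [map_add]; exact h1.add h2

lemma mem_of_one_tmul {F : Type} [AddCommGroup F] [Module S F] (x : F)
    (h : (1 : ResidueField S) ⊗ₜ[S] x = 0) : x ∈ maximalIdeal S • (⊤ : Submodule S F) := by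
  have := congrArg (TensorProduct.quotTensorEquivQuotSMul F (maximalIdeal S)) h
  have h2 : TensorProduct.quotTensorEquivQuotSMul F (maximalIdeal S)
    ((Ideal.Quotient.mk (maximalIdeal S) 1) ⊗ₜ[S] x) = 0 := this.trans (map_zero _)
  rw [TensorProduct.quotTensorEquivQuotSMul_mk_tmul, one_smul] at h2
  exact (Submodule.Quotient.mk_eq_zero _).1 h2

lemma one_tmul_of_mem {F : Type} [AddCommGroup F] [Module S F] (x : F)
    (h : x ∈ maximalIdeal S • (⊤ : Submodule S F)) : (1 : ResidueField S) ⊗ₜ[S] x = 0 := by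
  induction h using Submodule.smul_induction_on' with
  | smul r hr n hn =>
    rw [← TensorProduct.smul_tmul, Algebra.smul_def, IsLocalRing.ResidueField.algebraMap_eq, (IsLocalRing.residue_eq_zero_iff r).2 hr,
      zero_mul, TensorProduct.zero_tmul]
  | add x hx y hy h1 h2 => rw [TensorProduct.tmul_add, h1, h2, add_zero]

lemma exists_bad {X G Y : Type} [AddCommGroup X] [Module S X] [AddCommGroup G] [Module S G]
    [AddCommGroup Y] [Module S Y] [Module.Free S X] [Module.Finite S X] [Module.Free S G]
    [Module.Finite S G] (f : X →ₗ[S] G) (g : G →ₗ[S] Y) (hfg : Function.Exact f g)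
    (hg : Function.Surjective g) (hY : ¬ Module.Free S Y) :
    ∃ (e : X) (φ : X →ₗ[S] S), φ e = 1 ∧ f e ∈ maximalIdeal S • (⊤ : Submodule S G) := by
  have h1 : ¬ Function.Injective (f.lTensor (ResidueField S)) := fun h =>
    hY (Module.free_of_lTensor_residueField_injective f g hg hfg h)
  rw [injective_iff_map_eq_zero] at h1
  push Not at h1
  obtain ⟨z, hz, hz0⟩ := h1
  obtain ⟨e, rfl⟩ : ∃ e : X, (1 : ResidueField S) ⊗ₜ[S] e = z := by
    clear hz hz0
    induction z using TensorProduct.induction_on with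
    | zero => exact ⟨0, by simp⟩
    | tmul a x =>
      obtain ⟨a, rfl⟩ := IsLocalRing.residue_surjective a
      refine ⟨a • x, ?_⟩
      rw [← TensorProduct.smul_tmul, Algebra.smul_def, mul_one, IsLocalRing.ResidueField.algebraMap_eq]
    | add x y hx hy =>
      obtain ⟨a, rfl⟩ := hx
      obtain ⟨b, rfl⟩ := hy
      exact ⟨a + b, by rw [TensorProduct.tmul_add]⟩
  let b := Module.Free.chooseBasis S X
  have : ∃ a, IsUnit (b.repr e a) := by
    by_contra hcon
    push Not at hcon
    apply hz0
    apply one_tmul_of_mem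
    rw [← b.sum_repr e]
    exact Submodule.sum_mem _ fun a _ => Submodule.smul_mem_smul
      ((IsLocalRing.mem_maximalIdeal _).2 (hcon a)) trivial
  obtain ⟨a, u, hu⟩ := this
  refine ⟨e, (↑u⁻¹ : S) • b.coord a, ?_, mem_of_one_tmul _ hz⟩
  simp [Module.Basis.coord_apply, ← hu]

lemma local_main {X G : ℕ → Type} [∀ j, AddCommGroup (X j)] [∀ j, Module S (X j)]
    [∀ j, AddCommGroup (G j)] [∀ j, Module S (G j)] [∀ j, Module.Finite S (X j)]
    [∀ j, Module.Finite S (G j)] [∀ j, Module.Free S (G j)]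
    {N : Type} [AddCommGroup N] [Module S N]
    (f : ∀ j, X (j+1) →ₗ[S] G j) (g : ∀ j, G j →ₗ[S] X j)
    (hf : ∀ j, Function.Injective (f j)) (hg : ∀ j, Function.Surjective (g j))
    (hfg : ∀ j, Function.Exact (f j) (g j)) (n : ℕ) (hn : Module.Free S (X n)) (q : ℕ)
    (hq : ∀ j, q ≤ j → Function.Injective ((f j).rTensor N)) (a t : ℕ)
    (ha : ¬ EZ S (ResidueField S) (X 0) a)
    (ht : ¬ EZ S (ResidueField S) N t) (ht' : ∀ i < t, EZ S (ResidueField S) N i) :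
    ∃ i ≤ a + t + q, ¬ EZ S (ResidueField S) S i := by
  classical
  have hex : ∃ n, Module.Free S (X n) := ⟨n, hn⟩
  obtain ⟨P, hP, hmin⟩ : ∃ P, Module.Free S (X P) ∧ ∀ j < P, ¬ Module.Free S (X j) :=
    ⟨Nat.find hex, Nat.find_spec hex, fun j hj => Nat.find_min hex hj⟩
  have claim2 : P ≤ t + q := by
    by_contra hcon
    push Not at hcon
    obtain ⟨P', rfl⟩ : ∃ P', P = P' + 1 := ⟨P - 1, by omega⟩
    have van : ∀ i < t, ∀ j, q + 1 + i ≤ j → EZ S (ResidueField S) (X j ⊗[S] N) i := by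
      intro i
      induction i with
      | zero =>
        intro hi j hj
        obtain ⟨j, rfl⟩ : ∃ j', j = j' + 1 := ⟨j - 1, by omega⟩
        exact (EInj_zero _ (hq j (by omega))).EZ (EZ_tensor (ht' _ hi))
      | succ i ih =>
        intro hi j hj
        obtain ⟨j, rfl⟩ : ∃ j', j = j' + 1 := ⟨j - 1, by omega⟩
        exact (EInj_succ _ ((g j).rTensor N) (rTensor_exact N (hfg j) (hg j)) (hq j (by omega))
          (LinearMap.rTensor_surjective N (hg j)) (ih (by omega) j (by omega))).EZ
          (EZ_tensor (ht' _ hi))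
    have hinj : EInj (ResidueField S) ((f P').rTensor N) t := by
      rcases t with _ | t
      · exact EInj_zero _ (hq P' (by omega))
      · exact EInj_succ _ ((g P').rTensor N) (rTensor_exact N (hfg P') (hg P')) (hq P' (by omega))
          (LinearMap.rTensor_surjective N (hg P')) (van t (by omega) P' (by omega))
    obtain ⟨e, φ, hφ, he⟩ := exists_bad (f P') (g P') (hfg P') (hg P') (hmin P' (by omega))
    refine ht (EZ_of_kill (s := TensorProduct.mk S _ N e)
      (r := (TensorProduct.lid S N).toLinearMap ∘ₗ φ.rTensor N) hinj ?_ ?_)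
    · ext x
      simp [hφ]
    · have := EKill_tmul (N := N) (i := t) (f P' e) he
      convert this using 1
      ext x
      simp
  by_contra hcon
  push Not at hcon
  have van : ∀ c, c ≤ P → ∀ i, i + c ≤ a + t + q → EZ S (ResidueField S) (X (P - c)) i := by
    intro c
    induction c with
    | zero => 
      intro _ i hi
      exact EZ_free (hcon i (by omega))
    | succ c ih =>
      intro hc i hi
      obtain ⟨j, hj⟩ : ∃ j, P - c = j + 1 := ⟨P - c - 1, by omega⟩
      have hj' : P - (c + 1) = j := by omega
      rw [hj']
      have := ih (by omega) (i+1) (by omega)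
      rw [hj] at this
      exact EZ_quot (f j) (g j) (hfg j) (hf j) (hg j) (EZ_free (hcon i (by omega))) this
  have := van P le_rfl a (by omega)
  rw [Nat.sub_self] at this
  exact ha this

end LocalPart
section TorPart

open TensorProduct

variable {R : Type} [CommRing R]

/-- The diagram chase behind dimension shifting for Tor in the first variable. -/
lemma tor_chase {K F X : Type} [AddCommGroup K] [Module R K] [AddCommGroup F] [Module R F]
    [AddCommGroup X] [Module R X] {P₀ P₁ P₂ Q : Type}
    [AddCommGroup P₀] [Module R P₀] [AddCommGroup P₁] [Module R P₁]
    [AddCommGroup P₂] [Module R P₂] [AddCommGroup Q] [Module R Q]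
    [Module.Flat R P₀]
    (f : K →ₗ[R] F) (g : F →ₗ[R] X) (hf : Function.Injective f) (hg : Function.Surjective g)
    (hfg : Function.Exact f g)
    (d₂ : P₂ →ₗ[R] P₁) (d₁ : P₁ →ₗ[R] P₀) (d₀ : P₀ →ₗ[R] Q)
    (h21 : d₁ ∘ₗ d₂ = 0)
    (hF : Function.Exact (d₁.lTensor F) (d₀.lTensor F))
    (hX : Function.Exact (d₂.lTensor X) (d₁.lTensor X))
    (z : K ⊗[R] P₀) (hz : (d₀.lTensor F) (f.rTensor P₀ z) = 0) :
    ∃ u, d₁.lTensor K u = z := by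
  obtain ⟨w, hw⟩ := (hF _).1 hz
  have comm : ∀ {A B C D : Type} [AddCommGroup A] [Module R A] [AddCommGroup B] [Module R B]
      [AddCommGroup C] [Module R C] [AddCommGroup D] [Module R D] (a : A →ₗ[R] B) (c : C →ₗ[R] D)
      (x : A ⊗[R] C), c.lTensor B (a.rTensor C x) = a.rTensor D (c.lTensor A x) := by
    intro A B C D _ _ _ _ _ _ _ _ a c x
    rw [← LinearMap.comp_apply, ← LinearMap.comp_apply, LinearMap.lTensor_comp_rTensor,
      LinearMap.rTensor_comp_lTensor]
  have hgf : g ∘ₗ f = 0 := hfg.linearMap_comp_eq_zero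
  have h1 : d₁.lTensor X (g.rTensor P₁ w) = 0 := by
    rw [comm, hw, ← LinearMap.comp_apply, ← LinearMap.rTensor_comp, hgf]
    simp
  obtain ⟨v', hv'⟩ := (hX _).1 h1
  obtain ⟨v, rfl⟩ := LinearMap.rTensor_surjective P₂ hg v'
  rw [comm] at hv'
  have h2 : g.rTensor P₁ (w - d₂.lTensor F v) = 0 := by
    rw [map_sub, hv', sub_self]
  obtain ⟨u, hu⟩ := (rTensor_exact P₁ hfg hg _).1 h2
  refine ⟨u, ?_⟩
  apply Module.Flat.rTensor_preserves_injective_linearMap (M := P₀) f hf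
  rw [← comm, hu, map_sub, hw, ← LinearMap.comp_apply (d₁.lTensor F), ← LinearMap.lTensor_comp, h21]
  simp

variable {N : Type} [AddCommGroup N] [Module R N]

lemma tor_iff (P : ProjectiveResolution (ModuleCat.of R N)) (X : Type) [AddCommGroup X] [Module R X] (n : ℕ) :
    Subsingleton (torGroup R X N (n+1)) ↔
      Function.Exact ((P.complex.d (n+2) (n+1)).hom.lTensor X) ((P.complex.d (n+1) n).hom.lTensor X) := by
  rw [← ModuleCat.isZero_iff_subsingleton]
  have := (P.isoLeftDerivedObj ((MonoidalCategory.tensoringLeft (ModuleCat R)).obj (ModuleCat.of R X)) (n+1)).isZero_iff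
  refine this.trans ?_
  change Limits.IsZero (HomologicalComplex.homology _ (n+1)) ↔ _
  rw [← HomologicalComplex.exactAt_iff_isZero_homology,
    HomologicalComplex.exactAt_iff' _ (n+2) (n+1) n (by simp) (by simp),
    ShortComplex.ShortExact.moduleCat_exact_iff_function_exact]
  rfl

lemma flat_P (P : ProjectiveResolution (ModuleCat.of R N)) (n : ℕ) : Module.Flat R (P.complex.X n) := by
  have := P.projective n
  have : Module.Projective R (P.complex.X n) := (IsProjective.iff_projective _).2 this
  infer_instance

lemma P_exact (P : ProjectiveResolution (ModuleCat.of R N)) (n : ℕ) :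
    Function.Exact (P.complex.d (n+2) (n+1)).hom (P.complex.d (n+1) n).hom :=
  (ShortComplex.ShortExact.moduleCat_exact_iff_function_exact _).1 (P.exact_succ n)

/-- the augmentation -/
def augP (P : ProjectiveResolution (ModuleCat.of R N)) : P.complex.X 0 →ₗ[R] N := (P.π.f 0).hom

lemma augP_exact (P : ProjectiveResolution (ModuleCat.of R N)) :
    Function.Exact (P.complex.d 1 0).hom (augP P) :=
  (ShortComplex.ShortExact.moduleCat_exact_iff_function_exact _).1 P.exact₀

lemma augP_surj (P : ProjectiveResolution (ModuleCat.of R N)) :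
    Function.Surjective (augP P) := by
  have e : Epi (P.π.f 0) := inferInstance
  exact (ModuleCat.epi_iff_surjective _).1 e

lemma P_comp (P : ProjectiveResolution (ModuleCat.of R N)) (n : ℕ) :
    (P.complex.d (n+1) n).hom ∘ₗ (P.complex.d (n+2) (n+1)).hom = 0 := 
  (P_exact P n).linearMap_comp_eq_zero

variable {K F X : Type} [AddCommGroup K] [Module R K] [AddCommGroup F] [Module R F]
    [AddCommGroup X] [Module R X]

lemma tor_shift [Module.Flat R F] (f : K →ₗ[R] F) (g : F →ₗ[R] X) (hf : Function.Injective f)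
    (hg : Function.Surjective g) (hfg : Function.Exact f g) (n : ℕ)
    (h : Subsingleton (torGroup R X N (n+2))) : Subsingleton (torGroup R K N (n+1)) := by
  let P : ProjectiveResolution (ModuleCat.of R N) := ProjectiveResolution.of _
  rw [tor_iff P] at h ⊢
  have := flat_P P (n+1)
  intro z
  constructor
  · intro hz
    refine tor_chase f g hf hg hfg _ _ _ (P_comp P (n+1)) (Module.Flat.lTensor_exact F (P_exact P n)) h z ?_
    rw [← LinearMap.comp_apply, LinearMap.lTensor_comp_rTensor, ← LinearMap.rTensor_comp_lTensor,
      LinearMap.comp_apply, hz, map_zero]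
  · rintro ⟨u, rfl⟩
    rw [← LinearMap.comp_apply, ← LinearMap.lTensor_comp, P_comp]
    simp

lemma tor_inj [Module.Flat R F] (f : K →ₗ[R] F) (g : F →ₗ[R] X) (hf : Function.Injective f)
    (hg : Function.Surjective g) (hfg : Function.Exact f g)
    (h : Subsingleton (torGroup R X N 1)) : Function.Injective (f.rTensor N) := by
  let P : ProjectiveResolution (ModuleCat.of R N) := ProjectiveResolution.of _
  rw [tor_iff P] at h
  have := flat_P P 0
  rw [injective_iff_map_eq_zero]
  intro z hz
  obtain ⟨z, rfl⟩ := LinearMap.lTensor_surjective K (augP_surj P) z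
  obtain ⟨u, rfl⟩ := tor_chase f g hf hg hfg _ _ (augP P) (P_comp P 0)
    (Module.Flat.lTensor_exact F (augP_exact P)) h z (by
      rw [← LinearMap.comp_apply, LinearMap.lTensor_comp_rTensor, ← LinearMap.rTensor_comp_lTensor,
        LinearMap.comp_apply, hz])
  rw [← LinearMap.comp_apply, ← LinearMap.lTensor_comp, (augP_exact P).linearMap_comp_eq_zero]
  simp

end TorPart

section Syz

variable (R : Type) [CommRing R] [IsNoetherianRing R]

/-- finite modules -/
structure FinMod where
  /-- carrier -/
  M : ModuleCat.{0} R
  fin : Module.Finite R M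

instance (A : FinMod R) : Module.Finite R A.M := A.fin

variable {R}

/-- number of generators -/
def FinMod.n (A : FinMod R) : ℕ := (Module.Finite.exists_fin' R A.M).choose

/-- presentation -/
def FinMod.g (A : FinMod R) : (Fin A.n → R) →ₗ[R] A.M := (Module.Finite.exists_fin' R A.M).choose_spec.choose

lemma FinMod.g_surj (A : FinMod R) : Function.Surjective A.g :=
  (Module.Finite.exists_fin' R A.M).choose_spec.choose_spec

/-- first syzygy -/
def FinMod.syz (A : FinMod R) : FinMod R := ⟨ModuleCat.of R (LinearMap.ker A.g), by
  change Module.Finite R (LinearMap.ker A.g); infer_instance⟩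

/-- inclusion -/
def FinMod.f (A : FinMod R) : A.syz.M →ₗ[R] (Fin A.n → R) := (LinearMap.ker A.g).subtype

lemma FinMod.f_inj (A : FinMod R) : Function.Injective A.f := Subtype.val_injective

lemma FinMod.exact (A : FinMod R) : Function.Exact A.f A.g := LinearMap.exact_subtype_ker_map A.g

/-- iterated syzygies -/
def FinMod.res (A : FinMod R) : ℕ → FinMod R
  | 0 => A
  | j+1 => (A.res j).syz

lemma FinMod.syz_pd (A : FinMod R) (n : ℕ) (h : HasProjectiveDimensionLT A.M (n+2)) :
    HasProjectiveDimensionLT A.syz.M (n+1) := by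
  refine ((mkSC_shortExact A.f A.g A.exact A.f_inj A.g_surj).hasProjectiveDimensionLT_X₃_iff n ?_).1 h
  exact (IsProjective.iff_projective (R := R) (Fin A.n → R)).1 inferInstance

lemma FinMod.res_projective (A : FinMod R) (n : ℕ) (h : HasProjectiveDimensionLT A.M (n+1)) :
    Module.Projective R (A.res n).M := by
  have key : ∀ j m, HasProjectiveDimensionLT A.M (m + j + 1) → HasProjectiveDimensionLT (A.res j).M (m+1) := by
    intro j
    induction j with
    | zero => intro m hm; exact hm
    | succ j ih => 
      intro m hm
      exact FinMod.syz_pd _ _ (ih (m+1) (by convert hm using 1; omega))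
  have h1 := key n 0 (by simpa using h)
  rw [IsProjective.iff_projective, projective_iff_hasProjectiveDimensionLT_one]
  exact h1

lemma FinMod.res_tor {N : Type} [AddCommGroup N] [Module R N] (A : FinMod R) (q : ℕ)
    (h : ∀ i, q < i → Subsingleton (torGroup R A.M N i)) (j : ℕ) (hj : q ≤ j) :
    Function.Injective ((A.res j).f.rTensor N) := by
  have key : ∀ j m, (∀ i, m + j < i → Subsingleton (torGroup R A.M N i)) →
      ∀ i, m < i → Subsingleton (torGroup R (A.res j).M N i) := by
    intro j
    induction j with
    | zero => intro m hm; exact hm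
    | succ j ih => 
      intro m hm i hi
      obtain ⟨i, rfl⟩ : ∃ i', i = i' + 1 := ⟨i - 1, by omega⟩
      exact tor_shift (A.res j).f (A.res j).g (A.res j).f_inj (A.res j).g_surj (A.res j).exact i
        (ih (m+1) (fun i hi => hm i (by omega)) _ (by omega))
  exact tor_inj (A.res j).f (A.res j).g (A.res j).f_inj (A.res j).g_surj (A.res j).exact
    (key j 0 (fun i hi => h i (by omega)) 1 (by omega))

end Syz

section Final

open TensorProduct

lemma baseChange_rTensor_injective {R S : Type} [CommRing R] [CommRing S] [Algebra R S] [Module.Flat R S]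
    {K F N : Type} [AddCommGroup K] [Module R K] [AddCommGroup F] [Module R F]
    [AddCommGroup N] [Module R N] (f : K →ₗ[R] F) (h : Function.Injective (f.rTensor N)) :
    Function.Injective ((f.baseChange S).rTensor (S ⊗[R] N)) := by
  have h1 : Function.Injective ((f.rTensor N).baseChange S) :=
    Module.Flat.lTensor_preserves_injective_linearMap (M := S) _ h
  let e1 := AlgebraTensorModule.distribBaseChange R S K N
  let e2 := AlgebraTensorModule.distribBaseChange R S F N
  have comm : ((f.baseChange S).rTensor (S ⊗[R] N)) ∘ₗ e1.toLinearMap =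
      e2.toLinearMap ∘ₗ (f.rTensor N).baseChange S := by
    ext x y
    simp [e1, e2, AlgebraTensorModule.distribBaseChange_tmul]
  have h2 : Function.Injective (((f.baseChange S).rTensor (S ⊗[R] N)) ∘ₗ e1.toLinearMap) := by
    rw [comm]
    exact e2.injective.comp h1
  have h3 : ⇑((f.baseChange S).rTensor (S ⊗[R] N)) = (((f.baseChange S).rTensor (S ⊗[R] N)) ∘ₗ e1.toLinearMap) ∘ e1.symm := by
    ext x; simp
  rw [h3]
  exact h2.comp e1.symm.injective

lemma base_main {R S : Type} [CommRing R] [IsNoetherianRing R] [CommRing S] [IsLocalRing S]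
    [Algebra R S] [Module.Flat R S]
    (M N : Type) [AddCommGroup M] [Module R M] [Module.Finite R M] 
    [AddCommGroup N] [Module R N] (hpd : ePd R M < ⊤) (q : ℕ)
    (hq2 : ∀ i : ℕ, q < i → Subsingleton (torGroup R M N i)) (a t : ℕ)
    (ha : ¬ EZ S (ResidueField S) (S ⊗[R] M) a)
    (ht : ¬ EZ S (ResidueField S) (S ⊗[R] N) t)
    (ht' : ∀ i < t, EZ S (ResidueField S) (S ⊗[R] N) i) :
    ∃ i ≤ a + t + q, ¬ EZ S (ResidueField S) S i := by
  let A : FinMod R := ⟨ModuleCat.of R M, by change Module.Finite R M; infer_instance⟩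
  obtain ⟨n, hn⟩ : ∃ n : ℕ, ∀ (N : ModuleCat R) (i : ℕ), n < i →
    Subsingleton (((Ext R (ModuleCat R) i).obj (Opposite.op (ModuleCat.of R M))).obj N) := by
    by_contra hcon
    push Not at hcon
    apply hpd.ne
    unfold ePd
    apply top_le_iff.1
    apply le_sInf
    rintro _ ⟨n, hn, rfl⟩
    exfalso
    obtain ⟨N, i, hi, h⟩ := hcon n
    exact not_subsingleton_iff_nontrivial.2 h (hn N i hi)
  have hA : HasProjectiveDimensionLT A.M (n+1) := by
    rw [hasProjectiveDimensionLT_iff.{0}]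
    intro i hi Y e
    have := (newExt_iff (ModuleCat.of R M) Y i).1 (hn Y i (by omega))
    exact Subsingleton.elim (α := Abelian.Ext.{0} (ModuleCat.of R M) Y i) e 0
  have hproj := A.res_projective n hA
  refine local_main (X := fun j => S ⊗[R] (A.res j).M) (G := fun j => S ⊗[R] (Fin (A.res j).n → R))
    (fun j => (A.res j).f.baseChange S) (fun j => (A.res j).g.baseChange S)
    (fun j => Module.Flat.lTensor_preserves_injective_linearMap (M := S) _ (A.res j).f_inj)
    (fun j => LinearMap.lTensor_surjective S (A.res j).g_surj)
    (fun j => Module.Flat.lTensor_exact S (A.res j).exact) n ?_ q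
    (fun j hj => baseChange_rTensor_injective _ (A.res_tor q hq2 j hj)) a t ha ht ht'
  exact Module.free_of_flat_of_isLocalRing

lemma eDepth_spec (R : Type) [CommRing R] [IsLocalRing R] (M : Type) [AddCommGroup M] [Module R M]
    (h : eDepth R M ≠ ⊤) : ∃ t : ℕ, eDepth R M = t ∧ ¬ EZ R (ResidueField R) M t ∧
      ∀ i < t, EZ R (ResidueField R) M i := by
  classical
  have hne : ∃ i, ¬ EZ R (ResidueField R) M i := by
    by_contra hcon
    push Not at hcon
    apply h
    unfold eDepth
    apply top_le_iff.1
    apply le_sInf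
    rintro _ ⟨n, hn, rfl⟩
    exfalso
    exact not_subsingleton_iff_nontrivial.2 hn ((EZ_iff _ _ _).2 (hcon n))
  refine ⟨Nat.find hne, ?_, Nat.find_spec hne, fun i hi => not_not.1 (Nat.find_min hne hi)⟩
  apply le_antisymm
  · apply sInf_le
    refine ⟨_, ?_, rfl⟩
    have := Nat.find_spec hne
    rw [← EZ_iff] at this
    exact not_subsingleton_iff_nontrivial.1 this
  · apply le_sInf
    rintro _ ⟨i, hi, rfl⟩
    have : ¬ EZ R (ResidueField R) M i := by
      rw [← EZ_iff]; exact not_subsingleton_iff_nontrivial.2 hi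
    exact_mod_cast Nat.find_min' hne this

lemma eDepth_le (R : Type) [CommRing R] [IsLocalRing R] (M : Type) [AddCommGroup M] [Module R M]
    (i : ℕ) (h : ¬ EZ R (ResidueField R) M i) : eDepth R M ≤ i := by
  apply sInf_le
  refine ⟨_, ?_, rfl⟩
  rw [← EZ_iff] at h
  exact not_subsingleton_iff_nontrivial.1 h

end Final

/-- One-sided Jorgensen dependency inequality: if `pd_R M < ∞` and
`q = sup{ i : Tor_i^R(M, N) ≠ 0 } < ∞`, then for every `p ∈ Supp(M ⊗ N)`,
`depth R_p - depth M_p - depth N_p ≤ q`. -/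
theorem stmt_14 (R : Type) [CommRing R] [IsNoetherianRing R] [IsLocalRing R]
    (M N : Type) [AddCommGroup M] [Module R M] [Module.Finite R M] [Nontrivial M]
    [AddCommGroup N] [Module R N] [Module.Finite R N] [Nontrivial N]
    (hpd : ePd R M < ⊤)
    (q : ℕ) (hq1 : Nontrivial (torGroup R M N q))
    (hq2 : ∀ i : ℕ, q < i → Subsingleton (torGroup R M N i))
    (p : PrimeSpectrum R) (hp : p ∈ Module.support R (TensorProduct R M N)) :
    eDepth (Localization p.asIdeal.primeCompl) (Localization p.asIdeal.primeCompl) ≤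
      eDepth (Localization p.asIdeal.primeCompl) (LocalizedModule p.asIdeal.primeCompl M) +
      eDepth (Localization p.asIdeal.primeCompl) (LocalizedModule p.asIdeal.primeCompl N) +
      (q : ℕ∞) := by
  by_cases hM : eDepth (Localization p.asIdeal.primeCompl) (LocalizedModule p.asIdeal.primeCompl M) = ⊤
  · rw [hM]; simp
  by_cases hN : eDepth (Localization p.asIdeal.primeCompl) (LocalizedModule p.asIdeal.primeCompl N) = ⊤
  · rw [hN]; simp
  obtain ⟨a, ea, ha, -⟩ := eDepth_spec _ _ hM
  obtain ⟨t, et, ht, ht'⟩ := eDepth_spec _ _ hN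
  have : Module.Flat R (Localization p.asIdeal.primeCompl) :=
    IsLocalization.flat _ p.asIdeal.primeCompl
  let eM := LocalizedModule.equivTensorProduct p.asIdeal.primeCompl M
  let eN := LocalizedModule.equivTensorProduct p.asIdeal.primeCompl N
  obtain ⟨i, hi, h⟩ := base_main (S := Localization p.asIdeal.primeCompl) M N hpd q hq2 a t
    (fun h => ha (h.congr eM.symm _)) (fun h => ht (h.congr eN.symm _))
    (fun i hi => (ht' i hi).congr eN _)
  rw [ea, et]
  refine (eDepth_le _ _ i h).trans ?_
  exact_mod_cast hi
end
end
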